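/- There exist a constant C > 0 and an open neighborhood V ⊆ U of the origin O such that for all x ∈ V one has |x|·|Hs(f)(x)·∇f(x)| ≥ C·|∇f(x)|² (the Bochnak–Łojasiewicz inequality applied to the function |∇f|). -/

import Mathlib

open scoped RealInnerProductSpace Topology
open Filter

/-!
It suffices to prove `g =O(‖x‖ * ‖∇g‖)` for a germ `g` of an analytic function vanishing at the
origin, since `∇(‖∇f‖ ^ 2) = 2 • Hs(f) ∇f`. This bound need only be checked along each ultrafilter
`l` converging to the origin. Local uniformization along `l` yields an analytic chart `φ`, through
which `l` lifts, such that `g ∘ φ` and the coordinates of `φ` are monomials times units. By Euler's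
identity, differentiating such a function at `v` in the direction `v` multiplies it by a factor
which is bounded, and bounded away from zero if the function vanishes at the origin. The chain rule
`d(g ∘ φ)(v) v = dg(φ v) (dφ(v) v)` then gives the bound.

Local uniformization is proved by induction on the dimension. After a linear change of coordinates
all the functions are regular in the last variable, so by Hadamard's lemma they behave like
polynomials in it. An inner induction lowers their orders: a Tschirnhausen translation removes one
subleading coefficient, uniformization in lower dimension makes the coefficients monomials, and the
ultrafilter selects a chart of a monomial blow-up in which the orders drop.
-/

section HadamardDivision

variable {𝕜 E G : Type*} [NontriviallyNormedField 𝕜] [NormedAddCommGroup E] [NormedSpace 𝕜 E]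
  [NormedAddCommGroup G] [NormedSpace 𝕜 G]

/-- The power series of a difference quotient. If `z - π z = ℓ z • e`, telescoping the increment
`p (m + 1) (z, …, z) - p (m + 1) (π z, …, π z)` one slot at a time writes it as
`ℓ z • differenceQuotientSeries p π e m (z, …, z)`. -/
noncomputable def differenceQuotientSeries (p : FormalMultilinearSeries 𝕜 E G) (π : E →L[𝕜] E)
    (e : E) : FormalMultilinearSeries 𝕜 E G := fun m =>
  ∑ i : Fin (m + 1), ((p (m + 1)).compContinuousLinearMap fun j : Fin (m + 1) =>
    if j ≤ i then ContinuousLinearMap.id 𝕜 E else π).curryMid i e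

theorem smul_differenceQuotientSeries_apply (p : FormalMultilinearSeries 𝕜 E G) {π : E →L[𝕜] E}
    {e z : E} {c : 𝕜} (hz : z - π z = c • e) (m : ℕ) :
    c • differenceQuotientSeries p π e m (fun _ => z) =
      p (m + 1) (fun _ => z) - p (m + 1) (fun _ => π z) := by
  have htel := (p (m + 1)).toMultilinearMap.map_piecewise_sub_map_piecewise
    (fun _ => z) (fun _ => π z) 0 Finset.univ
  simp only [Finset.piecewise_univ, Finset.mem_univ, if_true,
    ContinuousMultilinearMap.coe_coe] at htel
  rw [htel, differenceQuotientSeries, sum_apply, Finset.smul_sum]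
  refine Finset.sum_congr rfl fun i _ => ?_
  have hupdate : (fun j => if j < i then z else if j = i then z - π z else π z) =
      Function.update (fun j => if j ≤ i then z else π z) i (c • e) := by
    ext1 j
    rcases lt_trichotomy j i with h | rfl | h
    · simp [h, h.le, h.ne]
    · simp [hz]
    · simp [h.not_gt, h.not_ge, h.ne']
  rw [hupdate, ContinuousMultilinearMap.map_update_smul, ContinuousMultilinearMap.curryMid_apply,
    ContinuousMultilinearMap.compContinuousLinearMap_apply]
  congr 2
  ext1 j
  rcases eq_or_ne j i with rfl | h
  · simp
  · obtain ⟨k, rfl⟩ := Fin.exists_succAbove_eq h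
    rw [Fin.insertNth_apply_succAbove, Function.update_of_ne h]
    split_ifs <;> rfl

theorem norm_differenceQuotientSeries_le (p : FormalMultilinearSeries 𝕜 E G) (π : E →L[𝕜] E)
    (e : E) (m : ℕ) :
    ‖differenceQuotientSeries p π e m‖ ≤
      (m + 1) * (‖p (m + 1)‖ * max 1 ‖π‖ ^ (m + 1) * ‖e‖) := by
  refine (norm_sum_le _ _).trans ((Finset.sum_le_card_nsmul _ _ _ fun i _ => ?_).trans_eq
    (by rw [Finset.card_univ, Fintype.card_fin, nsmul_eq_mul, Nat.cast_add_one]))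
  refine (ContinuousLinearMap.le_opNorm _ _).trans ?_
  rw [ContinuousMultilinearMap.norm_curryMid]
  gcongr
  refine (ContinuousMultilinearMap.norm_compContinuousLinearMap_le _ _).trans ?_
  gcongr
  refine (Finset.prod_le_prod (fun _ _ => norm_nonneg _) fun j _ => ?_).trans_eq
    (Fin.prod_const (m + 1) (max 1 ‖π‖))
  split_ifs
  · exact ContinuousLinearMap.norm_id_le.trans (le_max_left _ _)
  · exact le_max_right _ _

theorem radius_differenceQuotientSeries_pos {p : FormalMultilinearSeries 𝕜 E G}
    (hp : 0 < p.radius) (π : E →L[𝕜] E) (e : E) :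
    0 < (differenceQuotientSeries p π e).radius := by
  obtain ⟨C, r, hC, hr, hpr⟩ := p.le_mul_pow_of_radius_pos hp
  set M := max 1 ‖π‖
  have hM : 0 < M := lt_max_of_lt_left one_pos
  let s : NNReal := ⟨(2 * (r * M))⁻¹, by positivity⟩
  refine lt_of_lt_of_le (ENNReal.coe_pos.2 (show 0 < (2 * (r * M))⁻¹ by positivity))
    ((differenceQuotientSeries p π e).le_radius_of_bound (r := s) (C * (r * M) * ‖e‖) fun m => ?_)
  have htwo : (m + 1 : ℝ) ≤ 2 ^ m := mod_cast Nat.lt_two_pow_self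
  calc ‖differenceQuotientSeries p π e m‖ * (2 * (r * M))⁻¹ ^ m
      ≤ 2 ^ m * (C * r ^ (m + 1) * M ^ (m + 1) * ‖e‖) * (2 * (r * M))⁻¹ ^ m := by
        gcongr
        refine (norm_differenceQuotientSeries_le p π e m).trans ?_
        gcongr
        exact hpr _
    _ = C * (r * M) * ‖e‖ := by
        rw [inv_pow, mul_pow, mul_pow]
        field_simp
        ring

theorem exists_analyticAt_eq_add_smul [CompleteSpace G] {F : E → G} (hF : AnalyticAt 𝕜 F 0)
    (ℓ : E →L[𝕜] 𝕜) (e : E) :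
    ∃ H : E → G, AnalyticAt 𝕜 H 0 ∧ ∀ᶠ z in 𝓝 0, F z = F (z - ℓ z • e) + ℓ z • H z := by
  obtain ⟨p, r, hp⟩ := hF
  let π : E →L[𝕜] E := .id 𝕜 E - ℓ.smulRight e
  have hπ (z : E) : z - π z = ℓ z • e := by simp [π]
  have hq := (differenceQuotientSeries p π e).hasFPowerSeriesOnBall
    (radius_differenceQuotientSeries_pos (hp.r_pos.trans_le hp.r_le) π e)
  have hπ0 : Tendsto π (𝓝 0) (𝓝 0) := π.continuous.tendsto' 0 0 (map_zero π)
  refine ⟨_, hq.analyticAt, ?_⟩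
  filter_upwards [Metric.eball_mem_nhds 0 hp.r_pos,
    hπ0.eventually (Metric.eball_mem_nhds 0 hp.r_pos), Metric.eball_mem_nhds 0 hq.r_pos]
    with z hz hπz hqz
  have hFdiff := (hp.hasSum hz).sub (hp.hasSum hπz)
  have hHsum := (hq.hasSum hqz).const_smul (ℓ z)
  simp only [zero_add, smul_differenceQuotientSeries_apply p (hπ z)] at hFdiff hHsum
  have hzeroth : p 0 (fun _ => z) = p 0 (fun _ => π z) := congrArg _ (Subsingleton.elim _ _)
  have hquot := hHsum.unique ((hasSum_nat_add_iff' 1).2 hFdiff)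
  rw [Finset.sum_range_one, hzeroth, sub_self, sub_zero] at hquot
  rw [hquot, ← hπ z, sub_sub_cancel, add_sub_cancel]

end HadamardDivision

section LeadingExpansion

variable {X Y : Type*} [NormedAddCommGroup X] [NormedSpace ℝ X] [NormedAddCommGroup Y]
  [NormedSpace ℝ Y]

theorem tendsto_nhds_of_analyticAt_of_eq {f : X → Y} {x : X} {y : Y} (hf : AnalyticAt ℝ f x)
    (hfx : f x = y) : Tendsto f (𝓝 x) (𝓝 y) :=
  hfx ▸ hf.continuousAt

/-- `F (x, y) = ∑ i < d, c i x * y ^ i + h (x, y) * y ^ d` near the origin, where the analytic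
coefficients `c i` vanish at the origin and `h` is an analytic unit. This is the shape which the
Weierstrass preparation theorem would give, except that `h` may depend on `y`; it already exhibits
`F` as regular of order `d` in the last variable. -/
structure HasLeadingExpansion (F : X × ℝ → ℝ) (d : ℕ) (c : Fin d → X → ℝ) (h : X × ℝ → ℝ) :
    Prop where
  analyticAt_coeff : ∀ i, AnalyticAt ℝ (c i) 0
  coeff_zero : ∀ i, c i 0 = 0
  analyticAt_lead : AnalyticAt ℝ h 0
  lead_ne_zero : h 0 ≠ 0
  eventuallyEq : F =ᶠ[𝓝 0] fun z => ∑ i, c i z.1 * z.2 ^ (i : ℕ) + h z * z.2 ^ d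

theorem HasLeadingExpansion.comp_base {F : X × ℝ → ℝ} {d : ℕ} {c : Fin d → X → ℝ} {h : X × ℝ → ℝ}
    (hexp : HasLeadingExpansion F d c h) {ψ : Y → X} (hψ : AnalyticAt ℝ ψ 0) (hψ0 : ψ 0 = 0) :
    HasLeadingExpansion (fun z : Y × ℝ => F (ψ z.1, z.2)) d (fun i y => c i (ψ y))
      fun z => h (ψ z.1, z.2) := by
  have hΨ : AnalyticAt ℝ (fun z : Y × ℝ => (ψ z.1, z.2)) 0 :=
    (hψ.fun_comp_of_eq analyticAt_fst rfl).prod analyticAt_snd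
  have hΨ0 : (fun z : Y × ℝ => (ψ z.1, z.2)) 0 = 0 := Prod.ext hψ0 rfl
  refine ⟨fun i => (hexp.analyticAt_coeff i).fun_comp_of_eq hψ hψ0, fun i => ?_,
    hexp.analyticAt_lead.fun_comp_of_eq hΨ hΨ0, ?_, ?_⟩
  · rw [hψ0, hexp.coeff_zero]
  · exact (congrArg h hΨ0).trans_ne hexp.lead_ne_zero
  · exact (tendsto_nhds_of_analyticAt_of_eq hΨ hΨ0).eventually hexp.eventuallyEq

theorem exists_analyticAt_eq_add_snd_mul {F : X × ℝ → ℝ} (hF : AnalyticAt ℝ F 0) :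
    ∃ H : X × ℝ → ℝ, AnalyticAt ℝ H 0 ∧ ∀ᶠ z in 𝓝 0, F z = F (z.1, 0) + z.2 * H z := by
  obtain ⟨H, hH, hFH⟩ := exists_analyticAt_eq_add_smul hF (.snd ℝ X ℝ) (0, 1)
  refine ⟨H, hH, hFH.mono fun ⟨x, y⟩ h => ?_⟩
  simpa using h

theorem exists_hasLeadingExpansion {d : ℕ} {F : X × ℝ → ℝ} (hF : AnalyticAt ℝ F 0)
    (hord : analyticOrderAt (fun y => F (0, y)) 0 = d) :
    ∃ c h, HasLeadingExpansion F d c h := by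
  have hvert : AnalyticAt ℝ (fun y : ℝ => ((0 : X), y)) 0 := analyticAt_const.prod analyticAt_id
  have hhor : AnalyticAt ℝ (fun x : X => (x, (0 : ℝ))) 0 := analyticAt_id.prod analyticAt_const
  induction d generalizing F with
  | zero =>
    have hF0 : F 0 ≠ 0 :=
      ((hF.fun_comp_of_eq hvert rfl).analyticOrderAt_eq_zero).1 (by simpa using hord)
    exact ⟨Fin.elim0, F, fun i => i.elim0, fun i => i.elim0, hF, hF0, by simp⟩
  | succ d ih =>
    obtain ⟨H, hH, hFH⟩ := exists_analyticAt_eq_add_snd_mul hF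
    have hF0 : F (0, 0) = 0 :=
      apply_eq_zero_of_analyticOrderAt_ne_zero (f := fun y => F (0, y)) (by rw [hord]; simp)
    have hordH : analyticOrderAt (fun y => H (0, y)) 0 = d := by
      have hmul : (fun y : ℝ => F (0, y)) =ᶠ[𝓝 0] id * fun y => H (0, y) := by
        filter_upwards [hvert.continuousAt.eventually hFH] with y hy
        rw [hy, hF0, zero_add, Pi.mul_apply, id]
      rw [analyticOrderAt_congr hmul, analyticOrderAt_mul analyticAt_id
        (hH.fun_comp_of_eq hvert rfl), analyticOrderAt_id, add_comm, Nat.cast_add_one] at hord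
      exact (ENat.addLECancellable_of_ne_top ENat.one_ne_top).inj_left.1 hord
    obtain ⟨c, h, hexp⟩ := ih hH hordH
    refine ⟨Fin.cons (fun x => F (x, 0)) c, h,
      Fin.cases (hF.fun_comp_of_eq hhor rfl) hexp.analyticAt_coeff,
      Fin.cases hF0 hexp.coeff_zero, hexp.analyticAt_lead, hexp.lead_ne_zero, ?_⟩
    filter_upwards [hFH, hexp.eventuallyEq] with z hFz hHz
    rw [hFz, hHz, Fin.sum_univ_succ, mul_add, Finset.mul_sum, ← add_assoc]
    congr 1
    · congr 1
      · simp
      · exact Finset.sum_congr rfl fun i _ => by simp [pow_succ']; ring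
    · rw [pow_succ']; ring

theorem last_coeff_eq_of_tendsto {e : ℕ} {b : Fin (e + 1) → ℝ} {g : ℝ → ℝ} {L : ℝ}
    (hg : Tendsto g (𝓝[≠] 0) (𝓝 L))
    (h : ∀ᶠ y in 𝓝[≠] 0, ∑ i, b i * y ^ (i : ℕ) = y ^ e * g y) : b (Fin.last e) = L := by
  induction e with
  | zero =>
    exact tendsto_nhds_unique (tendsto_const_nhds.congr' (h.mono fun y hy => by simpa using hy)) hg
  | succ e ih =>
    have hid : Tendsto id (𝓝[≠] (0 : ℝ)) (𝓝 0) := tendsto_id.mono_left nhdsWithin_le_nhds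
    have hb0 : b 0 = 0 := by
      have hlhs : Tendsto (fun y : ℝ => ∑ i, b i * y ^ (i : ℕ)) (𝓝[≠] 0) (𝓝 (b 0)) := by
        have hcont : Continuous fun y : ℝ => ∑ i, b i * y ^ (i : ℕ) := by fun_prop
        exact (hcont.tendsto' 0 (b 0) (by simp [Fin.sum_univ_succ])).mono_left nhdsWithin_le_nhds
      have hrhs := (hid.pow (e + 1)).mul hg
      rw [zero_pow e.succ_ne_zero, zero_mul] at hrhs
      exact tendsto_nhds_unique (hlhs.congr' h) hrhs
    refine ih (b := fun i => b i.succ) ?_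
    filter_upwards [h, self_mem_nhdsWithin] with y hy hy0
    refine mul_left_cancel₀ (show y ≠ 0 from hy0) ?_
    rw [Fin.sum_univ_succ, hb0, zero_mul, zero_add] at hy
    rw [← mul_assoc, ← pow_succ', ← hy, Finset.mul_sum]
    exact Finset.sum_congr rfl fun i _ => by rw [Fin.val_succ]; ring

theorem HasLeadingExpansion.eventually_deriv_eq {F : X × ℝ → ℝ} (hF : AnalyticAt ℝ F 0) {d : ℕ}
    {c : Fin d → X × ℝ → ℝ} {h : (X × ℝ) × ℝ → ℝ}
    (hexp : HasLeadingExpansion (fun z => F (z.1.1, z.1.2 + z.2)) d c h) :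
    ∀ᶠ y in 𝓝 (0 : ℝ), deriv (fun t => F (0, t)) y =
      ∑ i, fderiv ℝ (c i) 0 (0, 1) * y ^ (i : ℕ) + fderiv ℝ h (0, y) ((0, 1), 0) * y ^ d := by
  have hvert : Tendsto (fun y : ℝ => ((0 : X × ℝ), y)) (𝓝 0) (𝓝 0) :=
    Continuous.tendsto' (by fun_prop) _ _ rfl
  have hf : AnalyticAt ℝ (fun t => F (0, t)) 0 :=
    hF.fun_comp_of_eq (analyticAt_const.prod analyticAt_id) rfl
  filter_upwards [hf.eventually_analyticAt, hvert.eventually hexp.eventuallyEq.eventually_nhds,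
    hvert.eventually hexp.analyticAt_lead.eventually_analyticAt] with y hfy hFy hhy
  have hline : HasDerivAt (fun a : ℝ => ((0 : X), a)) (0, 1) 0 :=
    (hasDerivAt_const _ _).prodMk (hasDerivAt_id _)
  have hcoeff (i) := (hexp.analyticAt_coeff i).differentiableAt.hasFDerivAt.comp_hasDerivAt
    (0 : ℝ) hline
  have hlead := hhy.differentiableAt.hasFDerivAt.comp_hasDerivAt
    (0 : ℝ) (hline.prodMk (hasDerivAt_const _ y))
  have hleft : HasDerivAt (fun a => F (0, a + y)) (deriv (fun t => F (0, t)) y) 0 := by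
    rw [← zero_add y] at hfy
    simpa only [zero_add] using hfy.differentiableAt.hasDerivAt.comp_add_const 0 y
  have hright := (HasDerivAt.fun_sum fun i (_ : i ∈ Finset.univ) =>
    (hcoeff i).mul_const (y ^ (i : ℕ))).add (hlead.mul_const (y ^ d))
  refine hleft.unique (hright.congr_of_eventuallyEq ?_)
  have hcont : ContinuousAt (fun a : ℝ => (((0 : X), a), y)) 0 := by fun_prop
  exact hcont.eventually hFy

theorem HasLeadingExpansion.fderiv_last_coeff_ne_zero {F : X × ℝ → ℝ} (hF : AnalyticAt ℝ F 0)
    {d : ℕ} (hord : analyticOrderAt (fun y => F (0, y)) 0 = d)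
    {c : Fin d → X × ℝ → ℝ} {h : (X × ℝ) × ℝ → ℝ}
    (hexp : HasLeadingExpansion (fun z => F (z.1.1, z.1.2 + z.2)) d c h) {i : Fin d}
    (hi : (i : ℕ) + 1 = d) : fderiv ℝ (c i) 0 (0, 1) ≠ 0 := by
  obtain ⟨e, rfl⟩ : ∃ e, d = e + 1 := ⟨i, hi.symm⟩
  obtain rfl : i = Fin.last e := Fin.ext (Nat.succ_injective hi)
  have hf : AnalyticAt ℝ (fun y => F (0, y)) 0 :=
    hF.fun_comp_of_eq (analyticAt_const.prod analyticAt_id) rfl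
  obtain ⟨u, hu, hu0, hfu⟩ := hf.deriv.analyticOrderAt_eq_natCast.1
    (analyticOrderAt_deriv_of_pos hf (hord.trans (Nat.cast_add_one e)))
  let hₐ : ℝ → ℝ := fun y => fderiv ℝ h (0, y) ((0, 1), 0)
  have hlim : Tendsto (fun y => u y - hₐ y * y) (𝓝[≠] 0) (𝓝 (u 0)) := by
    have hₐcont : ContinuousAt hₐ 0 :=
      (hexp.analyticAt_lead.fderiv.continuousAt.comp_of_eq (f := fun y : ℝ => ((0 : X × ℝ), y))
        (by fun_prop) rfl).clm_apply continuousAt_const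
    have hcont : Tendsto (fun y => u y - hₐ y * y) (𝓝 0) (𝓝 (u 0 - hₐ 0 * 0)) :=
      hu.continuousAt.sub (hₐcont.mul continuousAt_id)
    rw [mul_zero, sub_zero] at hcont
    exact hcont.mono_left nhdsWithin_le_nhds
  rw [last_coeff_eq_of_tendsto hlim (b := fun i => fderiv ℝ (c i) 0 (0, 1)) ?_]
  · exact hu0
  refine nhdsWithin_le_nhds ?_
  filter_upwards [hexp.eventually_deriv_eq hF, hfu] with y hy hfy
  rw [hfy, sub_zero, smul_eq_mul] at hy
  linear_combination -hy

theorem exists_implicit_zero [CompleteSpace X] {G : X × ℝ → ℝ} (hG : AnalyticAt ℝ G 0)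
    (hG0 : G 0 = 0) (hd : fderiv ℝ G 0 (0, 1) ≠ 0) :
    ∃ a : X → ℝ, AnalyticAt ℝ a 0 ∧ a 0 = 0 ∧ ∀ᶠ x in 𝓝 0, G (x, a x) = 0 := by
  have hc : ContDiffAt ℝ ⊤ G 0 := hG.contDiffAt
  have hinv : (fderiv ℝ G 0 ∘L .inr ℝ X ℝ).IsInvertible :=
    ⟨.unitsEquivAut ℝ (Units.mk0 _ hd), by ext; simp⟩
  exact ⟨hc.implicitFunction (by simp) hinv,
    (hc.contDiffAt_implicitFunction (by simp) hinv).analyticAt,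
    hc.implicitFunction_apply_self (by simp) hinv,
    by simpa [hG0] using hc.eventually_apply_implicitFunction (by simp) hinv⟩

/- Tschirnhausen: expanding `F k (x, a + y)` in `y` over the base of all `(x, a)`, the implicit
function theorem solves for the translation `a = a x` that kills the coefficient. -/
theorem exists_translation_hasLeadingExpansion [CompleteSpace X] {ι : Type*}
    {F : ι → X × ℝ → ℝ} {d : ι → ℕ} (hF : ∀ k, AnalyticAt ℝ (F k) 0)
    (hord : ∀ k, analyticOrderAt (fun y => F k (0, y)) 0 = d k) (k₀ : ι) :
    ∃ a : X → ℝ, AnalyticAt ℝ a 0 ∧ a 0 = 0 ∧ ∃ (c : ∀ k, Fin (d k) → X → ℝ) (h : ι → X × ℝ → ℝ),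
      (∀ k, HasLeadingExpansion (fun z => F k (z.1, a z.1 + z.2)) (d k) (c k) (h k)) ∧
      ∀ i : Fin (d k₀), (i : ℕ) + 1 = d k₀ → c k₀ i =ᶠ[𝓝 0] 0 := by
  have hshift : AnalyticAt ℝ (fun z : (X × ℝ) × ℝ => (z.1.1, z.1.2 + z.2)) 0 :=
    (analyticAt_fst.fun_comp_of_eq analyticAt_fst rfl).prod
      ((analyticAt_snd.fun_comp_of_eq analyticAt_fst rfl).add analyticAt_snd)
  have hexp (k) := exists_hasLeadingExpansion ((hF k).fun_comp_of_eq hshift (by simp))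
    (by simpa using hord k)
  choose c h hexp using hexp
  obtain ⟨a, ha, ha0, hzero⟩ : ∃ a : X → ℝ, AnalyticAt ℝ a 0 ∧ a 0 = 0 ∧
      ∀ i : Fin (d k₀), (i : ℕ) + 1 = d k₀ → ∀ᶠ x in 𝓝 0, c k₀ i (x, a x) = 0 := by
    by_cases hd : ∃ i : Fin (d k₀), (i : ℕ) + 1 = d k₀
    · obtain ⟨i, hi⟩ := hd
      obtain ⟨a, ha, ha0, hzero⟩ := exists_implicit_zero ((hexp k₀).analyticAt_coeff i)
        ((hexp k₀).coeff_zero i) ((hexp k₀).fderiv_last_coeff_ne_zero (hF k₀) (hord k₀) hi)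
      refine ⟨a, ha, ha0, fun j hj => ?_⟩
      rwa [show j = i from Fin.ext (Nat.succ_injective (hj.trans hi.symm))]
    · exact ⟨0, analyticAt_const, rfl, fun i hi => (hd ⟨i, hi⟩).elim⟩
  exact ⟨a, ha, ha0, _, _, fun k => (hexp k).comp_base (analyticAt_id.prod ha)
    (Prod.ext rfl ha0), hzero⟩

end LeadingExpansion

section NormalCrossings

variable {σ τ ι : Type*} [Fintype σ] [Fintype τ]

theorem analyticAt_apply (j : σ) (x : σ → ℝ) : AnalyticAt ℝ (fun v : σ → ℝ => v j) x :=
  (ContinuousLinearMap.proj (R := ℝ) (φ := fun _ => ℝ) j).analyticAt x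

/-- `F` is, near the origin, the monomial with exponent `γ` times an analytic unit. -/
def IsMonomialMulUnit (γ : σ → ℕ) (F : (σ → ℝ) → ℝ) : Prop :=
  ∃ u : (σ → ℝ) → ℝ, AnalyticAt ℝ u 0 ∧ u 0 ≠ 0 ∧ F =ᶠ[𝓝 0] fun v => (∏ j, v j ^ γ j) * u v

/-- The normal crossing condition at the origin for functions which may also vanish identically:
`F` is zero or a monomial times an analytic unit. -/
def IsNormalCrossing (F : (σ → ℝ) → ℝ) : Prop :=
  F =ᶠ[𝓝 0] 0 ∨ ∃ γ, IsMonomialMulUnit γ F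

theorem IsMonomialMulUnit.congr {γ : σ → ℕ} {F G : (σ → ℝ) → ℝ} (hF : IsMonomialMulUnit γ F)
    (hGF : G =ᶠ[𝓝 0] F) : IsMonomialMulUnit γ G :=
  let ⟨u, hu, hu0, hFu⟩ := hF
  ⟨u, hu, hu0, hGF.trans hFu⟩

theorem IsMonomialMulUnit.mul {a b : σ → ℕ} {F G : (σ → ℝ) → ℝ} (hF : IsMonomialMulUnit a F)
    (hG : IsMonomialMulUnit b G) : IsMonomialMulUnit (a + b) fun v => F v * G v := by
  obtain ⟨u, hu, hu0, hFu⟩ := hF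
  obtain ⟨w, hw, hw0, hGw⟩ := hG
  refine ⟨fun v => u v * w v, hu.mul hw, mul_ne_zero hu0 hw0, ?_⟩
  filter_upwards [hFu, hGw] with v hFv hGv
  simp only [hFv, hGv, Pi.add_apply, pow_add, Finset.prod_mul_distrib]
  ring

theorem IsMonomialMulUnit.pow {γ : σ → ℕ} {F : (σ → ℝ) → ℝ} (hF : IsMonomialMulUnit γ F) (k : ℕ) :
    IsMonomialMulUnit (k • γ) fun v => F v ^ k := by
  obtain ⟨u, hu, hu0, hFu⟩ := hF
  refine ⟨fun v => u v ^ k, hu.pow k, pow_ne_zero k hu0, ?_⟩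
  filter_upwards [hFu] with v hFv
  simp only [hFv, mul_pow, ← Finset.prod_pow, ← pow_mul, Pi.smul_apply, smul_eq_mul, mul_comm k]

theorem IsNormalCrossing.congr {F G : (σ → ℝ) → ℝ} (hF : IsNormalCrossing F) (hGF : G =ᶠ[𝓝 0] F) :
    IsNormalCrossing G :=
  hF.imp hGF.trans fun ⟨γ, hγ⟩ => ⟨γ, hγ.congr hGF⟩

theorem isNormalCrossing_of_ne_zero {u : (σ → ℝ) → ℝ} (hu : AnalyticAt ℝ u 0) (hu0 : u 0 ≠ 0) :
    IsNormalCrossing u :=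
  .inr ⟨0, u, hu, hu0, .of_forall fun v => by simp⟩

theorem isNormalCrossing_apply (j : σ) : IsNormalCrossing fun v => v j := by
  classical
  refine .inr ⟨Pi.single j 1, 1, analyticAt_const, one_ne_zero, .of_forall fun v => ?_⟩
  simp [Pi.single_apply, pow_ite]

theorem IsNormalCrossing.mul {F G : (σ → ℝ) → ℝ} (hF : IsNormalCrossing F)
    (hG : IsNormalCrossing G) : IsNormalCrossing fun v => F v * G v := by
  rcases hF with hF | ⟨a, hF⟩
  · exact .inl (hF.mono fun v hv => by simp [hv])
  rcases hG with hG | ⟨b, hG⟩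
  · exact .inl (hG.mono fun v hv => by simp [hv])
  exact .inr ⟨a + b, hF.mul hG⟩

theorem IsNormalCrossing.prod (s : Finset ι) {F : ι → (σ → ℝ) → ℝ}
    (hF : ∀ i ∈ s, IsNormalCrossing (F i)) : IsNormalCrossing fun v => ∏ i ∈ s, F i v := by
  classical
  induction s using Finset.induction_on with
  | empty => simpa using isNormalCrossing_of_ne_zero analyticAt_const one_ne_zero
  | insert a s ha ih =>
    simp only [Finset.prod_insert ha]
    exact (hF a (s.mem_insert_self a)).mul (ih fun i hi => hF i (Finset.mem_insert_of_mem hi))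

theorem IsNormalCrossing.pow {F : (σ → ℝ) → ℝ} (hF : IsNormalCrossing F) (k : ℕ) :
    IsNormalCrossing fun v => F v ^ k := by
  simpa using IsNormalCrossing.prod (Finset.range k) fun _ _ => hF

theorem IsNormalCrossing.comp {F : (τ → ℝ) → ℝ} (hF : IsNormalCrossing F) {φ : (σ → ℝ) → τ → ℝ}
    (hφ : AnalyticAt ℝ φ 0) (hφ0 : φ 0 = 0) (hφ' : ∀ j, IsNormalCrossing fun v => φ v j) :
    IsNormalCrossing fun v => F (φ v) := by
  have hlim := tendsto_nhds_of_analyticAt_of_eq hφ hφ0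
  rcases hF with hF | ⟨γ, u, hu, hu0, hFu⟩
  · exact .inl (hlim.eventually hF)
  · have hunit := isNormalCrossing_of_ne_zero (hu.fun_comp_of_eq hφ hφ0) (by rwa [hφ0])
    exact ((IsNormalCrossing.prod _ fun j _ => (hφ' j).pow (γ j)).mul hunit).congr
      (hlim.eventually hFu)

theorem IsMonomialMulUnit.analyticOrderAt_curve {γ : σ → ℕ} {F : (σ → ℝ) → ℝ}
    (hF : IsMonomialMulUnit γ F) {q : σ → ℕ} (hq : ∀ j, 0 < q j) :
    analyticOrderAt (fun t : ℝ => F fun j => t ^ q j) 0 = (q ⬝ᵥ γ : ℕ) := by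
  obtain ⟨u, hu, hu0, hFu⟩ := hF
  have hcurve : AnalyticAt ℝ (fun (t : ℝ) j => t ^ q j) 0 :=
    .pi fun j => analyticAt_id.fun_pow (q j)
  have hcurve0 : (fun j => (0 : ℝ) ^ q j) = 0 := funext fun j => zero_pow (hq j).ne'
  have hFcurve : (fun t : ℝ => F fun j => t ^ q j) =ᶠ[𝓝 0]
      fun t => t ^ (q ⬝ᵥ γ) * u fun j => t ^ q j := by
    refine ((tendsto_nhds_of_analyticAt_of_eq hcurve hcurve0).eventually hFu).mono fun t ht => ?_
    simp only [ht, dotProduct, ← pow_mul, Finset.prod_pow_eq_pow_sum]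
  have hunit := hu.fun_comp_of_eq hcurve hcurve0
  rw [analyticOrderAt_congr hFcurve]
  exact (((analyticAt_id.pow _).mul hunit).analyticOrderAt_eq_natCast).2
    ⟨_, hunit, by rwa [hcurve0], by simp⟩

theorem exists_pos_dotProduct_lt {a b : σ → ℕ} (hba : ¬b ≤ a) :
    ∃ q : σ → ℕ, (∀ j, 0 < q j) ∧ q ⬝ᵥ a < q ⬝ᵥ b := by
  classical
  obtain ⟨i, hi⟩ : ∃ i, a i < b i := by simpa [Pi.le_def] using hba
  refine ⟨1 + Pi.single i (1 ⬝ᵥ a + 1), fun j => by simp, ?_⟩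
  simp only [add_dotProduct, single_dotProduct]
  nlinarith

theorem IsMonomialMulUnit.analyticOrderAt_sub_curve {a b : σ → ℕ} {F G : (σ → ℝ) → ℝ}
    (hF : IsMonomialMulUnit a F) (hG : IsMonomialMulUnit b G) {q : σ → ℕ} (hq : ∀ j, 0 < q j)
    (hab : q ⬝ᵥ a ≠ q ⬝ᵥ b) :
    analyticOrderAt (fun t : ℝ => F (fun j => t ^ q j) - G fun j => t ^ q j) 0 =
      (min (q ⬝ᵥ a) (q ⬝ᵥ b) : ℕ) := by
  have hsum := analyticOrderAt_add_of_ne (f := fun t : ℝ => F fun j => t ^ q j)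
    (g := -fun t : ℝ => G fun j => t ^ q j) (z₀ := 0)
  rw [analyticOrderAt_neg, hF.analyticOrderAt_curve hq, hG.analyticOrderAt_curve hq,
    ← sub_eq_add_neg] at hsum
  exact (hsum (Nat.cast_injective.ne hab)).trans (Nat.mono_cast.map_min).symm

/- Along a curve `t ↦ (t ^ q j)` of positive weights, `F - G` vanishes to order `q ⬝ᵥ a` or
`q ⬝ᵥ b`, whichever is smaller. If each is the smaller one for suitable weights, then these orders
do not depend linearly on the weights. -/
theorem IsMonomialMulUnit.le_or_le {a b : σ → ℕ} {F G : (σ → ℝ) → ℝ}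
    (hF : IsMonomialMulUnit a F) (hG : IsMonomialMulUnit b G)
    (hFG : IsNormalCrossing fun v => F v - G v) : a ≤ b ∨ b ≤ a := by
  by_contra! hab
  obtain ⟨q, hq, hqab⟩ := exists_pos_dotProduct_lt hab.2
  obtain ⟨r, hr, hrba⟩ := exists_pos_dotProduct_lt hab.1
  have hordq := hF.analyticOrderAt_sub_curve hG hq hqab.ne
  have hordr := hF.analyticOrderAt_sub_curve hG hr hrba.ne'
  rw [min_eq_left hqab.le] at hordq
  rw [min_eq_right hrba.le] at hordr
  rcases hFG with hFG | ⟨c, hc⟩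
  · have hcurve : Tendsto (fun (t : ℝ) j => t ^ q j) (𝓝 0) (𝓝 0) :=
      Continuous.tendsto' (by fun_prop) _ _ (funext fun j => zero_pow (hq j).ne')
    rw [analyticOrderAt_eq_top.2 (hcurve.eventually hFG)] at hordq
    exact ENat.top_ne_natCast _ hordq
  · have hqr (j) : 0 < (q + r) j := Nat.add_pos_left (hq j) _
    rw [hc.analyticOrderAt_curve hq, Nat.cast_inj] at hordq
    rw [hc.analyticOrderAt_curve hr, Nat.cast_inj] at hordr
    have hmin := le_analyticOrderAt_sub (f := fun t : ℝ => F fun j => t ^ (q + r) j)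
      (g := fun t : ℝ => G fun j => t ^ (q + r) j) (z₀ := 0)
    have hsub := hc.analyticOrderAt_curve hqr
    change analyticOrderAt ((fun t : ℝ => F _) - fun t : ℝ => G _) 0 = _ at hsub
    rw [hsub, hF.analyticOrderAt_curve hqr, hG.analyticOrderAt_curve hqr] at hmin
    simp only [min_le_iff, Nat.cast_le, add_dotProduct] at hmin
    omega

end NormalCrossings

section Euler

open Asymptotics

variable {σ : Type*} [Fintype σ]

theorem fderiv_apply_self_of_homogeneous {E : Type*} [NormedAddCommGroup E] [NormedSpace ℝ E]
    {F : E → ℝ} {m : ℕ} (hF : ∀ (t : ℝ) v, F (t • v) = t ^ m * F v) {v : E}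
    (hv : DifferentiableAt ℝ F v) : fderiv ℝ F v v = m * F v := by
  have hray : HasDerivAt (fun t : ℝ => t • v) v 1 := by
    simpa using (hasDerivAt_id (1 : ℝ)).smul_const v
  have hcomp : HasDerivAt (fun t : ℝ => F (t • v)) (fderiv ℝ F v v) 1 :=
    hv.hasFDerivAt.comp_hasDerivAt_of_eq 1 hray (one_smul ℝ v).symm
  have hpow : HasDerivAt (fun t : ℝ => F (t • v)) (m * F v) 1 := by
    simpa [hF] using (hasDerivAt_pow m (1 : ℝ)).mul_const (F v)
  exact hcomp.unique hpow

theorem IsMonomialMulUnit.exists_fderiv_apply_self_eq {γ : σ → ℕ} {F : (σ → ℝ) → ℝ}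
    (hF : IsMonomialMulUnit γ F) :
    ∃ κ : (σ → ℝ) → ℝ, Tendsto κ (𝓝 0) (𝓝 (∑ j, γ j : ℕ)) ∧
      ∀ᶠ v in 𝓝 0, fderiv ℝ F v v = κ v * F v := by
  obtain ⟨u, hu, hu0, hFu⟩ := hF
  refine ⟨fun v => (∑ j, γ j : ℕ) + fderiv ℝ u v v / u v, ?_, ?_⟩
  · have hratio := (hu.fderiv.continuousAt.clm_apply continuousAt_id).div hu.continuousAt hu0
    exact (tendsto_const_nhds.add hratio).trans_eq (by simp)
  filter_upwards [hFu.eventually_nhds, hu.eventually_analyticAt,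
    hu.continuousAt.eventually_ne hu0] with v hFv huv huv0
  have hmono : DifferentiableAt ℝ (fun v : σ → ℝ => ∏ j, v j ^ γ j) v :=
    (Finset.univ.analyticAt_fun_prod fun j _ => (analyticAt_apply j v).fun_pow _).differentiableAt
  have heuler := fderiv_apply_self_of_homogeneous (m := ∑ j, γ j) (fun t v => by
    simp [mul_pow, Finset.prod_mul_distrib, Finset.prod_pow_eq_pow_sum]) hmono
  rw [EventuallyEq.fderiv_eq hFv, fderiv_fun_mul hmono huv.differentiableAt, hFv.self_of_nhds]
  simp only [add_apply, smul_apply, smul_eq_mul, heuler]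
  rw [add_mul, div_mul_eq_mul_div, mul_left_comm _ _ (u v), mul_div_assoc,
    mul_div_cancel_right₀ _ huv0]
  ring

theorem IsNormalCrossing.fderiv_apply_self_isBigO {F : (σ → ℝ) → ℝ} (hF : IsNormalCrossing F) :
    (fun v => fderiv ℝ F v v) =O[𝓝 0] F := by
  rcases hF with hF | ⟨γ, hF⟩
  · exact .of_bound 0 ((hF.fderiv (𝕜 := ℝ)).mono fun v hv => by simp [hv])
  · obtain ⟨κ, hκ, hκF⟩ := hF.exists_fderiv_apply_self_eq
    exact ((hκ.isBigO_one ℝ).mul (isBigO_refl F (𝓝 0))).congr' (hκF.mono fun v => Eq.symm)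
      (.of_forall fun v => one_mul _)

theorem IsNormalCrossing.isBigO_fderiv_apply_self {F : (σ → ℝ) → ℝ} (hF : IsNormalCrossing F)
    (hF0 : F 0 = 0) : F =O[𝓝 0] fun v => fderiv ℝ F v v := by
  rcases hF with hF | ⟨γ, hF⟩
  · exact (isBigO_zero _ (𝓝 0)).congr' hF.symm .rfl
  · obtain ⟨κ, hκ, hκF⟩ := hF.exists_fderiv_apply_self_eq
    have hγ : ((∑ j, γ j : ℕ) : ℝ) ≠ 0 := by
      obtain ⟨u, -, hu0, hFu⟩ := hF
      have hmono := (mul_eq_zero.1 (hFu.self_of_nhds.symm.trans hF0)).resolve_right hu0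
      obtain ⟨j, -, hj⟩ := Finset.prod_eq_zero_iff.1 hmono
      rw [Nat.cast_ne_zero, Ne, Finset.sum_eq_zero_iff]
      exact fun h => by simp [h j] at hj
    have hinv := ((hκ.inv₀ hγ).isBigO_one ℝ).mul
      (isBigO_refl (fun v : σ → ℝ => fderiv ℝ F v v) (𝓝 0))
    refine hinv.congr' ?_ (.of_forall fun v => one_mul _)
    filter_upwards [hκF, hκ.eventually_ne hγ] with v hv hκv
    rw [hv, inv_mul_cancel_left₀ hκv]

end Euler

section Lift

variable {Ω T T' σ : Type*} [NormedAddCommGroup T] [NormedSpace ℝ T] [NormedAddCommGroup T']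
  [NormedSpace ℝ T'] [Fintype σ]

/-- Along `l`, the map `p` factors through an analytic chart `φ` at the origin with property `Q`,
by parameters tending to the origin. -/
def LiftsToChart (l : Filter Ω) (p : Ω → T) (Q : ((σ → ℝ) → T) → Prop) : Prop :=
  ∃ (w : Ω → σ → ℝ) (φ : (σ → ℝ) → T),
    Tendsto w l (𝓝 0) ∧ AnalyticAt ℝ φ 0 ∧ φ 0 = 0 ∧ p =ᶠ[l] φ ∘ w ∧ Q φ

theorem LiftsToChart.map {l : Filter Ω} {p : Ω → T} {p' : Ω → T'} {Q : ((σ → ℝ) → T) → Prop}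
    {Q' : ((σ → ℝ) → T') → Prop} (h : LiftsToChart l p' Q') {χ : T' → T}
    (hχ : AnalyticAt ℝ χ 0) (hχ0 : χ 0 = 0) (hp : p =ᶠ[l] χ ∘ p')
    (hQ : ∀ φ, AnalyticAt ℝ φ 0 → φ 0 = 0 → Q' φ → Q (χ ∘ φ)) : LiftsToChart l p Q := by
  obtain ⟨w, φ, hw, hφ, hφ0, hpφ, hQφ⟩ := h
  refine ⟨w, χ ∘ φ, hw, hχ.comp_of_eq hφ hφ0, ?_, ?_, hQ φ hφ hφ0 hQφ⟩
  · rw [Function.comp_apply, hφ0, hχ0]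
  · filter_upwards [hp, hpφ] with ω hpω hφω
    simp only [hpω, hφω, Function.comp_apply]

theorem analyticAt_tail_prod_head {n : ℕ} :
    AnalyticAt ℝ (fun v : Fin (n + 1) → ℝ => (Fin.tail v, v 0)) 0 :=
  (AnalyticAt.pi fun j => analyticAt_apply (Fin.succ j) 0).prod (analyticAt_apply 0 0)

theorem liftsToChart_comp_tail_prod_head {l : Filter Ω} {n : ℕ} {p : Ω → T}
    {χ : (Fin n → ℝ) × ℝ → T} (hχ : AnalyticAt ℝ χ 0) (hχ0 : χ 0 = 0)
    {p' : Ω → (Fin n → ℝ) × ℝ} (hp' : Tendsto p' l (𝓝 0)) (hp : p =ᶠ[l] χ ∘ p')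
    {Q : ((Fin (n + 1) → ℝ) → T) → Prop} (hQ : Q fun v => χ (Fin.tail v, v 0)) :
    LiftsToChart l p Q := by
  refine ⟨fun ω => Fin.cons (p' ω).2 (p' ω).1, fun v => χ (Fin.tail v, v 0), ?_,
    hχ.fun_comp_of_eq analyticAt_tail_prod_head rfl, hχ0, hp, hQ⟩
  rw [← Fin.cons_self_tail (0 : Fin (n + 1) → ℝ)]
  exact hp'.snd_nhds.finCons hp'.fst_nhds

end Lift

section Ratio

variable {Ω : Type*} {l : Ultrafilter Ω}

theorem exists_tendsto_or_tendsto_inv_zero (u : Ω → ℝ) :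
    (∃ c, Tendsto u l (𝓝 c)) ∨ (∀ᶠ ω in l, u ω ≠ 0) ∧ Tendsto u⁻¹ l (𝓝 0) := by
  by_cases h : ∃ M, ∀ᶠ ω in l, ‖u ω‖ ≤ M
  · obtain ⟨M, hM⟩ := h
    obtain ⟨c, -, hc⟩ := (isCompact_closedBall (0 : ℝ) M).ultrafilter_le_nhds (l.map u)
      (le_principal_iff.2 (hM.mono fun ω hω => mem_closedBall_zero_iff.2 hω))
    exact .inl ⟨c, hc⟩
  · have hlarge (M : ℝ) : ∀ᶠ ω in l, M < ‖u ω‖ := by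
      simpa only [not_le] using Ultrafilter.eventually_not.2 (not_exists.1 h M)
    refine .inr ⟨(hlarge 0).mono fun ω => norm_pos_iff.1, ?_⟩
    refine tendsto_inv₀_cobounded.comp (tendsto_norm_atTop_iff_cobounded.1 ?_)
    exact tendsto_atTop.2 fun M => (hlarge M).mono fun ω => le_of_lt

theorem tendsto_zero_or_exists_tendsto_inv (u : Ω → ℝ) :
    Tendsto u l (𝓝 0) ∨ (∀ᶠ ω in l, u ω ≠ 0) ∧ ∃ c, Tendsto u⁻¹ l (𝓝 c) := by
  rcases exists_tendsto_or_tendsto_inv_zero (l := l) u with ⟨c, hc⟩ | ⟨hu, h⟩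
  · obtain rfl | hc0 := eq_or_ne c 0
    · exact .inl hc
    · exact .inr ⟨hc.eventually_ne hc0, c⁻¹, hc.inv₀ hc0⟩
  · exact .inr ⟨hu, 0, h⟩

end Ratio

section MonomialOverCoordinate

variable {Ω : Type*} {l : Ultrafilter Ω} {n : ℕ}

/-- The monomials in the coordinates of `Fin n → ℝ`, as a submonoid, so that they can be divided by
one coordinate at a time. -/
def coordinateMonomials (n : ℕ) : Submonoid ((Fin n → ℝ) → ℝ) :=
  Submonoid.closure (Set.range fun j v => v j)

theorem analyticAt_of_mem_coordinateMonomials {θ : (Fin n → ℝ) → ℝ}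
    (hθ : θ ∈ coordinateMonomials n) (x : Fin n → ℝ) : AnalyticAt ℝ θ x := by
  induction hθ using Submonoid.closure_induction with
  | mem θ hθ =>
    obtain ⟨j, rfl⟩ := hθ
    exact analyticAt_apply j x
  | one => exact analyticAt_const
  | mul θ θ' _ _ hθ hθ' => exact hθ.mul hθ'

/-- In the chart `φ` all coordinates are normal crossings, and the last one divides the monomial
`θ` in the others, with an analytic quotient vanishing at the origin. -/
def LastDivides (θ : (Fin n → ℝ) → ℝ) (φ : (Fin (n + 1) → ℝ) → (Fin n → ℝ) × ℝ) : Prop :=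
  (∀ j, IsNormalCrossing fun v => (φ v).1 j) ∧ IsNormalCrossing (fun v => (φ v).2) ∧
    ∃ t : (Fin (n + 1) → ℝ) → ℝ, AnalyticAt ℝ t 0 ∧ t 0 = 0 ∧
      (fun v => θ (φ v).1) =ᶠ[𝓝 0] fun v => t v * (φ v).2

theorem liftsToChart_of_tendsto_coordinate_div {p : Ω → (Fin n → ℝ) × ℝ}
    (hp : Tendsto p l (𝓝 0)) (hp2 : ∀ᶠ ω in l, (p ω).2 ≠ 0) {i : Fin n} {c : ℝ}
    (hc : Tendsto (fun ω => (p ω).1 i / (p ω).2) l (𝓝 c)) {θ : (Fin n → ℝ) → ℝ}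
    (hθ : AnalyticAt ℝ θ 0) (hcθ : c * θ 0 = 0) :
    LiftsToChart l p (LastDivides fun s => s i * θ s) := by
  let χ : (Fin n → ℝ) × ℝ → (Fin n → ℝ) × ℝ := fun z =>
    (Function.update z.1 i (z.2 * (c + z.1 i)), z.2)
  have hcoord (j : Fin n) : AnalyticAt ℝ (fun z : (Fin n → ℝ) × ℝ => z.1 j) 0 :=
    (analyticAt_apply j _).fun_comp analyticAt_fst
  have hχ : AnalyticAt ℝ χ 0 := by
    refine (AnalyticAt.pi fun j => ?_).prod analyticAt_snd
    obtain rfl | hj := eq_or_ne j i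
    · simpa using analyticAt_snd.fun_mul (analyticAt_const.fun_add (hcoord j))
    · simpa [Function.update_of_ne hj] using hcoord j
  have hχ0 : χ 0 = 0 := by simp [χ]
  have hp' : Tendsto (fun ω => (Function.update (p ω).1 i ((p ω).1 i / (p ω).2 - c), (p ω).2)) l
      (𝓝 0) := by
    refine Tendsto.prodMk_nhds ?_ hp.snd_nhds
    simpa using hp.fst_nhds.update i (hc.sub_const c)
  refine liftsToChart_comp_tail_prod_head hχ hχ0 hp'
    (hp2.mono fun ω hω => by simp [χ, mul_div_cancel₀ _ hω]) ?_
  refine ⟨fun j => ?_, isNormalCrossing_apply 0,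
    fun v => (c + v i.succ) * θ (χ (Fin.tail v, v 0)).1, ?_, ?_, .of_forall fun v => ?_⟩
  · obtain rfl | hj := eq_or_ne j i
    · refine IsNormalCrossing.congr ((isNormalCrossing_apply 0).mul
        (G := fun v => c + v j.succ) ?_) (.of_forall fun v => by simp [χ, Fin.tail])
      obtain rfl | hc0 := eq_or_ne c 0
      · simpa using isNormalCrossing_apply j.succ
      · exact isNormalCrossing_of_ne_zero (analyticAt_const.add (analyticAt_apply _ 0))
          (by simpa using hc0)
    · simpa [χ, Function.update_of_ne hj, Fin.tail] using isNormalCrossing_apply j.succ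
  · exact (analyticAt_const.add (analyticAt_apply _ 0)).mul
      (hθ.fun_comp_of_eq (analyticAt_fst.fun_comp (hχ.comp_of_eq
        analyticAt_tail_prod_head rfl)) (congrArg Prod.fst hχ0))
  · exact (congrArg₂ _ (add_zero c) (congrArg (θ ·.1) hχ0)).trans hcθ
  · simp [χ, Fin.tail]
    ring

theorem liftsToChart_lastDivides {θ : (Fin n → ℝ) → ℝ} (hθ : θ ∈ coordinateMonomials n)
    {p : Ω → (Fin n → ℝ) × ℝ} (hp : Tendsto p l (𝓝 0)) (hp2 : ∀ᶠ ω in l, (p ω).2 ≠ 0)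
    (hlim : Tendsto (fun ω => θ (p ω).1 / (p ω).2) l (𝓝 0)) :
    LiftsToChart l p (LastDivides θ) := by
  induction hθ using Submonoid.closure_induction_left generalizing p with
  | one =>
    have hone : Tendsto (fun _ => (1 : ℝ)) (l : Filter Ω) (𝓝 (0 * 0)) :=
      (hlim.mul hp.snd_nhds).congr' (hp2.mono fun ω hω => by simp [hω])
    simpa using tendsto_nhds_unique hone tendsto_const_nhds
  | mul_left x hx θ hθ ih =>
    obtain ⟨i, rfl⟩ := hx
    have hθ' := analyticAt_of_mem_coordinateMonomials hθ 0
    rcases exists_tendsto_or_tendsto_inv_zero (l := l) fun ω => (p ω).1 i / (p ω).2 with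
      ⟨c, hc⟩ | ⟨hne, hinv⟩
    · refine liftsToChart_of_tendsto_coordinate_div hp hp2 hc hθ' (tendsto_nhds_unique ?_ hlim)
      refine (hc.mul (hθ'.continuousAt.tendsto.comp hp.fst_nhds)).congr fun ω => ?_
      simp [div_mul_eq_mul_div]
    · have hpi : ∀ᶠ ω in l, (p ω).1 i ≠ 0 := hne.mono fun ω hω h => hω (by simp [h])
      have hinv' : Tendsto (fun ω => (p ω).2 / (p ω).1 i) l (𝓝 0) :=
        hinv.congr fun ω => inv_div _ _
      refine (ih (hp.fst_nhds.prodMk_nhds hinv')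
        ((hp2.and hpi).mono fun ω hω => div_ne_zero hω.1 hω.2) ?_).map
        (χ := fun z => (z.1, z.1 i * z.2)) ?_ (by simp) ?_ ?_
      · refine hlim.congr fun ω => ?_
        rw [Pi.mul_apply, div_div_eq_mul_div, mul_comm]
      · exact analyticAt_fst.prod
          (((analyticAt_apply i _).fun_comp analyticAt_fst).mul analyticAt_snd)
      · filter_upwards [hpi] with ω hω
        simp [mul_div_cancel₀ _ hω]
      · rintro φ - - ⟨hφ1, hφ2, t, ht, ht0, hφt⟩
        refine ⟨hφ1, (hφ1 i).mul hφ2, t, ht, ht0, hφt.mono fun v hv => ?_⟩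
        simp only [Function.comp_apply, Pi.mul_apply, hv]
        ring

end MonomialOverCoordinate

section LeadingPolynomial

open Polynomial

variable {d : ℕ} {z : Fin d → ℝ} {a b : ℝ}

theorem analyticOrderAt_eval_add {Q : ℝ[X]} (hQ : Q ≠ 0) (b : ℝ) :
    analyticOrderAt (fun y => Q.eval (b + y)) 0 = Q.rootMultiplicity b := by
  obtain ⟨R, hQR, hR⟩ := Q.exists_eq_pow_rootMultiplicity_mul_and_not_dvd hQ b
  have heval (P : ℝ[X]) : AnalyticAt ℝ (fun y => P.eval (b + y)) 0 :=
    (analyticAt_const.add analyticAt_id).aeval_polynomial P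
  refine (heval Q).analyticOrderAt_eq_natCast.2 ⟨_, heval R, ?_, .of_forall fun y => ?_⟩
  · simpa [dvd_iff_isRoot] using hR
  · conv_lhs => rw [hQR]
    simp

theorem rootMultiplicity_le_natDegree (Q : ℝ[X]) (b : ℝ) : Q.rootMultiplicity b ≤ Q.natDegree := by
  rw [← count_roots]
  exact (Multiset.count_le_card b _).trans Q.card_roots'

theorem eq_C_mul_X_sub_C_pow_of_rootMultiplicity_eq {Q : ℝ[X]}
    (h : Q.rootMultiplicity b = Q.natDegree) :
    Q = C Q.leadingCoeff * (X - C b) ^ Q.natDegree :=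
  eq_leadingCoeff_mul_of_monic_of_dvd_of_natDegree_le ((monic_X_sub_C b).pow _)
    (h ▸ Q.pow_rootMultiplicity_dvd b) (by rw [natDegree_pow, natDegree_X_sub_C, mul_one])

/-- The polynomial `∑ i < d, z i * X ^ i + a * X ^ d` of a leading expansion whose coefficients
have been frozen at a point. -/
noncomputable def leadingPolynomial (z : Fin d → ℝ) (a : ℝ) : ℝ[X] :=
  ofFn d z + monomial d a

theorem eval_leadingPolynomial (y : ℝ) :
    (leadingPolynomial z a).eval y = ∑ i, z i * y ^ (i : ℕ) + a * y ^ d := by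
  simp [leadingPolynomial, ofFn_eq_sum_monomial, eval_finsetSum]

theorem coeff_leadingPolynomial (i : Fin d) : (leadingPolynomial z a).coeff i = z i := by
  simp [leadingPolynomial, coeff_monomial, i.2.ne']

theorem coeff_leadingPolynomial_self : (leadingPolynomial z a).coeff d = a := by
  simp [leadingPolynomial]

theorem leadingPolynomial_ne_zero (ha : a ≠ 0) : leadingPolynomial z a ≠ 0 := fun h =>
  ha (by simpa [h] using (coeff_leadingPolynomial_self (z := z) (a := a)).symm)

theorem natDegree_leadingPolynomial (ha : a ≠ 0) : (leadingPolynomial z a).natDegree = d := by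
  refine natDegree_eq_of_le_of_coeff_ne_zero ?_ (coeff_leadingPolynomial_self.trans_ne ha)
  exact (natDegree_add_le_of_degree_le (natDegree_le_of_degree_le (ofFn_degree_lt z).le)
    (natDegree_monomial_le a))

theorem leadingPolynomial_eq_of_rootMultiplicity_eq (ha : a ≠ 0)
    (h : (leadingPolynomial z a).rootMultiplicity b = d) :
    leadingPolynomial z a = C a * (X - C b) ^ d := by
  have hdeg := natDegree_leadingPolynomial (z := z) ha
  have heq := eq_C_mul_X_sub_C_pow_of_rootMultiplicity_eq (h.trans hdeg.symm)
  rwa [leadingCoeff, hdeg, coeff_leadingPolynomial_self] at heq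

theorem eq_zero_of_rootMultiplicity_leadingPolynomial_eq (ha : a ≠ 0)
    (h : (leadingPolynomial z a).rootMultiplicity b = d) {i : Fin d} (hi : (i : ℕ) + 1 = d)
    (hzi : z i = 0) : b = 0 := by
  have hcoeff := coeff_leadingPolynomial (z := z) (a := a) i
  have hchoose : d.choose i ≠ 0 := (Nat.choose_pos i.2.le).ne'
  rw [leadingPolynomial_eq_of_rootMultiplicity_eq ha h, hzi, coeff_C_mul, sub_eq_add_neg, ← C_neg,
    coeff_X_add_C_pow, (Nat.sub_eq_iff_eq_add' i.2.le).2 hi.symm, pow_one] at hcoeff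
  simpa [ha, hchoose] using hcoeff

theorem coeff_eq_zero_of_rootMultiplicity_leadingPolynomial_zero (ha : a ≠ 0)
    (h : (leadingPolynomial z a).rootMultiplicity 0 = d) (i : Fin d) : z i = 0 := by
  rw [← coeff_leadingPolynomial (z := z) (a := a) i,
    leadingPolynomial_eq_of_rootMultiplicity_eq ha h]
  simp [coeff_X_pow, i.2.ne]

theorem rootMultiplicity_leadingPolynomial_lt {ι : Type*} {d : ι → ℕ} {z : ∀ k, Fin (d k) → ℝ}
    {a : ι → ℝ} (ha : ∀ k, a k ≠ 0) (hz : ∃ k i, z k i ≠ 0) {k₀ : ι} (hk₀ : d k₀ ≠ 0)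
    (hlast : ∀ i : Fin (d k₀), (i : ℕ) + 1 = d k₀ → z k₀ i = 0) (b : ℝ) :
    (fun k => (leadingPolynomial (z k) (a k)).rootMultiplicity b) < d := by
  refine lt_of_le_of_ne (fun k => (rootMultiplicity_le_natDegree _ b).trans_eq
    (natDegree_leadingPolynomial (ha k))) fun heq => ?_
  have hlt : d k₀ - 1 < d k₀ := Nat.sub_one_lt hk₀
  have hi : d k₀ - 1 + 1 = d k₀ := Nat.sub_one_add_one hk₀
  obtain rfl : b = 0 := eq_zero_of_rootMultiplicity_leadingPolynomial_eq (ha k₀) (congrFun heq k₀)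
    (i := ⟨_, hlt⟩) hi (hlast _ hi)
  obtain ⟨k, i, hki⟩ := hz
  exact hki (coeff_eq_zero_of_rootMultiplicity_leadingPolynomial_zero (ha k) (congrFun heq k) i)

end LeadingPolynomial

section StrictTransform

variable {X : Type*}

/-- If `F` has a leading expansion of order `d` whose coefficients are `θ ^ (d - i) * z i`, this is
the quotient of `F (x, θ x * (b + y))` by `θ x ^ d`. -/
def strictTransform {d : ℕ} (θ : X → ℝ) (z : Fin d → X → ℝ) (h : X × ℝ → ℝ) (b : ℝ)
    (w : X × ℝ) : ℝ :=
  ∑ i, z i w.1 * (b + w.2) ^ (i : ℕ) + h (w.1, θ w.1 * (b + w.2)) * (b + w.2) ^ d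

theorem analyticOrderAt_strictTransform [Zero X] {d : ℕ} {θ : X → ℝ} {z : Fin d → X → ℝ}
    {h : X × ℝ → ℝ} (hθ0 : θ 0 = 0) (hh : h 0 ≠ 0) (b : ℝ) :
    analyticOrderAt (fun y => strictTransform θ z h b (0, y)) 0 =
      (leadingPolynomial (fun i => z i 0) (h 0)).rootMultiplicity b := by
  rw [← analyticOrderAt_eval_add (leadingPolynomial_ne_zero hh) b]
  simp only [strictTransform, hθ0, zero_mul, eval_leadingPolynomial, Prod.mk_zero_zero]

variable [NormedAddCommGroup X] [NormedSpace ℝ X] {I : Type*}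

/-- Near the origin, each `c i` is the multiple of the power `θ ^ m i` by the analytic function
`z i`. -/
structure HasPowFactor (θ : X → ℝ) (m : I → ℕ) (c z : I → X → ℝ) : Prop where
  analyticAt : ∀ i, AnalyticAt ℝ (z i) 0
  eventuallyEq : ∀ i, c i =ᶠ[𝓝 0] fun x => θ x ^ m i * z i x

variable {d : ℕ} {F h : X × ℝ → ℝ} {c z : Fin d → X → ℝ} {θ : X → ℝ}

theorem analyticAt_blowUp (hθ : AnalyticAt ℝ θ 0) (b : ℝ) :
    AnalyticAt ℝ (fun w : X × ℝ => (w.1, θ w.1 * (b + w.2))) 0 :=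
  analyticAt_fst.prod ((hθ.fun_comp_of_eq analyticAt_fst rfl).mul
    (analyticAt_const.add analyticAt_snd))

theorem HasLeadingExpansion.blowUp_eventuallyEq (hexp : HasLeadingExpansion F d c h)
    (hz : HasPowFactor θ (fun i : Fin d => d - i) c z) (hθ : AnalyticAt ℝ θ 0) (hθ0 : θ 0 = 0)
    (b : ℝ) : (fun w => F (w.1, θ w.1 * (b + w.2))) =ᶠ[𝓝 0]
      fun w => θ w.1 ^ d * strictTransform θ z h b w := by
  have hχ := tendsto_nhds_of_analyticAt_of_eq (analyticAt_blowUp hθ b) (y := 0) (by simp [hθ0])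
  filter_upwards [hχ.eventually hexp.eventuallyEq,
    continuousAt_fst.eventually (eventually_all.2 hz.eventuallyEq)] with w hF hc
  rw [hF, strictTransform, mul_add (θ w.1 ^ d), Finset.mul_sum]
  refine congrArg₂ _ (Finset.sum_congr rfl fun i _ => ?_) ?_
  · rw [hc i, mul_pow, ← pow_sub_mul_pow (θ w.1) i.2.le]
    ring
  · rw [mul_pow]
    ring

theorem HasLeadingExpansion.analyticAt_strictTransform (hexp : HasLeadingExpansion F d c h)
    (hz : HasPowFactor θ (fun i : Fin d => d - i) c z) (hθ : AnalyticAt ℝ θ 0) (hθ0 : θ 0 = 0)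
    (b : ℝ) : AnalyticAt ℝ (strictTransform θ z h b) 0 := by
  have hby : AnalyticAt ℝ (fun w : X × ℝ => b + w.2) 0 := analyticAt_const.add analyticAt_snd
  refine (Finset.univ.analyticAt_fun_sum fun i _ =>
    ((hz.analyticAt i).fun_comp_of_eq analyticAt_fst rfl).mul (hby.pow i)).add ?_
  exact (hexp.analyticAt_lead.fun_comp_of_eq (analyticAt_blowUp hθ b) (by simp [hθ0])).mul
    (hby.pow d)

theorem HasLeadingExpansion.exists_eventuallyEq_pow_mul (hexp : HasLeadingExpansion F d c h)
    (hz : HasPowFactor θ (fun i : Fin d => d - i) c z) {Y : Type*} [NormedAddCommGroup Y]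
    [NormedSpace ℝ Y] {φ : Y → X × ℝ} (hφ : AnalyticAt ℝ φ 0) (hφ0 : φ 0 = 0) {t : Y → ℝ}
    (ht : AnalyticAt ℝ t 0) (ht0 : t 0 = 0)
    (hθ : (fun v => θ (φ v).1) =ᶠ[𝓝 0] fun v => t v * (φ v).2) :
    ∃ u : Y → ℝ, AnalyticAt ℝ u 0 ∧ u 0 ≠ 0 ∧
      (fun v => F (φ v)) =ᶠ[𝓝 0] fun v => (φ v).2 ^ d * u v := by
  refine ⟨fun v => ∑ i : Fin d, t v ^ (d - i : ℕ) * z i (φ v).1 + h (φ v),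
    (Finset.univ.analyticAt_fun_sum fun i _ => (ht.pow _).mul
      ((hz.analyticAt i).fun_comp_of_eq (analyticAt_fst.fun_comp hφ) (by rw [hφ0]; rfl))).add
      (hexp.analyticAt_lead.fun_comp_of_eq hφ hφ0), ?_, ?_⟩
  · have hsum : ∑ i : Fin d, t 0 ^ (d - i : ℕ) * z i (φ 0).1 = 0 :=
      Finset.sum_eq_zero fun i _ => by
        rw [ht0, zero_pow (Nat.sub_ne_zero_of_lt i.2), zero_mul]
    exact ((congrArg₂ (· + ·) hsum (congrArg h hφ0)).trans (zero_add _)).trans_ne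
      hexp.lead_ne_zero
  · have hφt := tendsto_nhds_of_analyticAt_of_eq hφ hφ0
    filter_upwards [hφt.eventually hexp.eventuallyEq, hφt.fst_nhds.eventually
      (eventually_all.2 hz.eventuallyEq), hθ] with v hF hc hθv
    rw [hF, mul_add, Finset.mul_sum]
    refine congrArg₂ _ (Finset.sum_congr rfl fun i _ => ?_) (mul_comm _ _)
    rw [hc i, hθv, ← pow_sub_mul_pow (φ v).2 i.2.le]
    ring

end StrictTransform

section Uniformization

variable {Ω σ : Type*} {l : Ultrafilter Ω} {n : ℕ}

/-- Local uniformization along `l` in dimension `n`: every finite family of analytic functions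
becomes normal crossings in a chart to which a given map tending to the origin lifts. -/
def LocalUniformization (l : Ultrafilter Ω) (n : ℕ) : Prop :=
  ∀ ⦃κ : Type⦄ [Finite κ] ⦃G : κ → (Fin n → ℝ) → ℝ⦄, (∀ j, AnalyticAt ℝ (G j) 0) →
    ∀ ⦃p : Ω → Fin n → ℝ⦄, Tendsto p l (𝓝 0) →
      LiftsToChart l p fun φ : (Fin n → ℝ) → Fin n → ℝ => ∀ j, IsNormalCrossing fun v => G j (φ v)

section SignedPower

/-- The map `v ↦ (ε j * v j ^ M)`. With suitable signs `ε`, extracting the `M`-th roots of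
parameters amounts to reparametrizing by it. -/
def signedPower (ε : σ → ℝ) (M : ℕ) (v : σ → ℝ) : σ → ℝ :=
  fun j => ε j * v j ^ M

theorem signedPower_zero (ε : σ → ℝ) {M : ℕ} (hM : M ≠ 0) : signedPower ε M 0 = 0 := by
  ext j
  simp [signedPower, hM]

theorem exists_tendsto_signedPower_eq [Finite σ] {w : Ω → σ → ℝ} (hw : Tendsto w l (𝓝 0)) {M : ℕ}
    (hM : M ≠ 0) : ∃ (ε : σ → ℝ) (s : Ω → σ → ℝ), (∀ j, ε j ≠ 0) ∧ Tendsto s l (𝓝 0) ∧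
      w =ᶠ[l] signedPower ε M ∘ s := by
  have hsign (j) : ∃ ε : ℝ, ε ≠ 0 ∧ ∀ᶠ ω in l, w ω j = ε * |w ω j| := by
    rcases l.em fun ω => 0 ≤ w ω j with h | h
    · exact ⟨1, one_ne_zero, h.mono fun ω hω => by rw [abs_of_nonneg hω, one_mul]⟩
    · exact ⟨-1, by norm_num, h.mono fun ω hω => by rw [abs_of_neg (not_le.1 hω)]; ring⟩
  choose ε hε hεw using hsign
  refine ⟨ε, fun ω j => |w ω j| ^ (M⁻¹ : ℝ), hε, tendsto_pi_nhds.2 fun j => ?_, ?_⟩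
  · simpa [hM] using (tendsto_pi_nhds.1 hw j).abs.rpow_const (p := (M⁻¹ : ℝ)) (.inr (by positivity))
  · filter_upwards [eventually_all.2 hεw] with ω hω
    ext j
    rw [Function.comp_apply, signedPower, Real.rpow_inv_natCast_pow (abs_nonneg _) hM]
    exact hω j

variable [Fintype σ]

theorem analyticAt_signedPower (ε : σ → ℝ) (M : ℕ) : AnalyticAt ℝ (signedPower ε M) 0 :=
  .pi fun j => analyticAt_const.mul ((analyticAt_apply j 0).fun_pow M)

theorem isNormalCrossing_signedPower_apply {ε : σ → ℝ} (hε : ∀ j, ε j ≠ 0) (M : ℕ) (j : σ) :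
    IsNormalCrossing fun v => signedPower ε M v j :=
  (isNormalCrossing_of_ne_zero analyticAt_const (hε j)).mul ((isNormalCrossing_apply j).pow M)

theorem IsMonomialMulUnit.exists_comp_signedPower_eq {γ : σ → ℕ} {F : (σ → ℝ) → ℝ}
    (hF : IsMonomialMulUnit γ F) {ε : σ → ℝ} (hε : ∀ j, ε j ≠ 0) {m e : ℕ} (hme : m * e ≠ 0)
    {β : σ → ℕ} (hβ : β ≤ e • γ) : ∃ z : (σ → ℝ) → ℝ, AnalyticAt ℝ z 0 ∧
      (fun v => F (signedPower ε (m * e) v)) =ᶠ[𝓝 0] (fun v => (∏ j, v j ^ β j) ^ m * z v) ∧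
      (β = e • γ → z 0 ≠ 0) := by
  obtain ⟨u, hu, hu0, hFu⟩ := hF
  have hanalytic := analyticAt_signedPower ε (m * e)
  have hzero := signedPower_zero ε hme
  refine ⟨fun v => (∏ j, v j ^ (m * (e * γ j - β j))) * (∏ j, ε j ^ γ j) *
    u (signedPower ε (m * e) v), ?_, ?_, ?_⟩
  · exact ((Finset.univ.analyticAt_fun_prod fun j _ => (analyticAt_apply j 0).pow _).mul
      analyticAt_const).mul (hu.fun_comp_of_eq hanalytic hzero)
  · filter_upwards [(tendsto_nhds_of_analyticAt_of_eq hanalytic hzero).eventually hFu] with v hv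
    rw [hv, ← Finset.prod_pow, ← mul_assoc, ← mul_assoc, ← Finset.prod_mul_distrib,
      ← Finset.prod_mul_distrib]
    refine congrArg (· * _) (Finset.prod_congr rfl fun j _ => ?_)
    have hsplit : m * e * γ j = β j * m + m * (e * γ j - β j) := by
      have hle : β j ≤ e * γ j := hβ j
      rw [mul_comm (β j), ← mul_add, Nat.add_sub_cancel' hle, mul_assoc]
    rw [signedPower, mul_pow, ← pow_mul, hsplit, pow_add, pow_mul]
    ring
  · rintro rfl
    simp [hzero, hu0, Finset.prod_ne_zero_iff, hε]

end SignedPower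

section PowerFactor

variable {I : Type*} [Finite I]

theorem exists_minimal_exponent [Fintype σ] {C : I → (σ → ℝ) → ℝ} {e : I → ℕ}
    (hC : ∀ q, IsNormalCrossing (C q))
    (hdiff : ∀ q r, IsNormalCrossing fun v => C q v ^ e q - C r v ^ e r)
    (hne : ∃ q, ¬C q =ᶠ[𝓝 0] 0) : ∃ (γ : I → σ → ℕ) (q₀ : I), ¬C q₀ =ᶠ[𝓝 0] 0 ∧
      ∀ q, ¬C q =ᶠ[𝓝 0] 0 → IsMonomialMulUnit (γ q) (C q) ∧ e q₀ • γ q₀ ≤ e q • γ q := by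
  have hexp (q) : ∃ γ, ¬C q =ᶠ[𝓝 0] 0 → IsMonomialMulUnit γ (C q) := by
    rcases hC q with h | ⟨γ, hγ⟩
    · exact ⟨0, fun h' => (h' h).elim⟩
    · exact ⟨γ, fun _ => hγ⟩
  choose γ hγ using hexp
  obtain ⟨q₀, hq₀, hmin⟩ := (Set.toFinite {q | ¬C q =ᶠ[𝓝 0] 0}).exists_minimalFor
    (fun q => e q • γ q) _ hne
  refine ⟨γ, q₀, hq₀, fun q hq => ⟨hγ q hq, ?_⟩⟩
  rcases ((hγ q₀ hq₀).pow (e q₀)).le_or_le ((hγ q hq).pow (e q)) (hdiff q₀ q) with h | h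
  · exact h
  · exact hmin hq h

theorem prod_pow_mem_coordinateMonomials (β : Fin n → ℕ) :
    (fun v => ∏ j, v j ^ β j) ∈ coordinateMonomials n := by
  have hprod : (fun v : Fin n → ℝ => ∏ j, v j ^ β j) = ∏ j, (fun v => v j) ^ β j := by
    ext v
    simp
  rw [hprod]
  exact prod_mem fun j _ => pow_mem (Submonoid.subset_closure (Set.mem_range_self j)) _

theorem exists_hasPowFactor_comp_signedPower {C : I → (Fin n → ℝ) → ℝ} (hC0 : ∀ q, C q 0 = 0)
    {m e : I → ℕ} {M : ℕ} (hM : M ≠ 0) (hme : ∀ q, m q * e q = M)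
    (hC : ∀ q, IsNormalCrossing (C q))
    (hdiff : ∀ q r, IsNormalCrossing fun v => C q v ^ e q - C r v ^ e r)
    (hne : ∃ q, ¬C q =ᶠ[𝓝 0] 0) {ε : Fin n → ℝ} (hε : ∀ j, ε j ≠ 0) :
    ∃ θ ∈ coordinateMonomials n, θ 0 = 0 ∧ ∃ z,
      HasPowFactor θ m (fun q v => C q (signedPower ε M v)) z ∧
      (∃ q, z q 0 ≠ 0) ∧ ∀ q, C q =ᶠ[𝓝 0] 0 → z q 0 = 0 := by
  obtain ⟨γ, q₀, hq₀, hmin⟩ := exists_minimal_exponent hC hdiff hne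
  let θ : (Fin n → ℝ) → ℝ := fun v => ∏ j, v j ^ (e q₀ • γ q₀) j
  have hθ0 : θ 0 = 0 := by
    obtain ⟨u, -, hu0, hCu⟩ := (hmin q₀ hq₀).1.pow (e q₀)
    have he : e q₀ ≠ 0 := right_ne_zero_of_mul (hme q₀ ▸ hM)
    have hval : C q₀ 0 ^ e q₀ = θ 0 * u 0 := hCu.self_of_nhds
    rw [hC0, zero_pow he] at hval
    exact (mul_eq_zero.1 hval.symm).resolve_right hu0
  have hfactor (q) : ∃ z : (Fin n → ℝ) → ℝ, AnalyticAt ℝ z 0 ∧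
      (fun v => C q (signedPower ε M v)) =ᶠ[𝓝 0] (fun v => θ v ^ m q * z v) ∧
      (q = q₀ → z 0 ≠ 0) ∧ (C q =ᶠ[𝓝 0] 0 → z 0 = 0) := by
    by_cases hq : C q =ᶠ[𝓝 0] 0
    · refine ⟨0, analyticAt_const, ?_, fun h => (hq₀ (h ▸ hq)).elim, fun _ => rfl⟩
      have hlim := tendsto_nhds_of_analyticAt_of_eq (analyticAt_signedPower ε M)
        (signedPower_zero ε hM)
      exact (hlim.eventually hq).mono fun v hv => by simp [hv]
    · obtain ⟨hγ, hle⟩ := hmin q hq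
      rw [← hme q] at hM ⊢
      obtain ⟨z, hz, hCz, hz0⟩ := hγ.exists_comp_signedPower_eq hε hM hle
      exact ⟨z, hz, hCz, fun h => hz0 (by rw [h]), fun h => (hq h).elim⟩
  choose z hz hCz hz0 hz0' using hfactor
  exact ⟨θ, prod_pow_mem_coordinateMonomials _, hθ0, z, ⟨hz, hCz⟩, ⟨q₀, hz0 q₀ rfl⟩, hz0'⟩

/- With `m q * e q = M` for all `q`, the least of the monomials of the `C q ^ e q` becomes an `M`-th
power, whose `M`-th root `θ` satisfies `θ ^ m q ∣ C q`, after extracting `M`-th roots of the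
coordinates. -/
theorem LocalUniformization.liftsToChart_hasPowFactor {I : Type} [Finite I]
    (hU : LocalUniformization l n) {C : I → (Fin n → ℝ) → ℝ} (hC : ∀ q, AnalyticAt ℝ (C q) 0)
    (hC0 : ∀ q, C q 0 = 0) {m : I → ℕ} (hm : ∀ q, m q ≠ 0) {p : Ω → Fin n → ℝ}
    (hp : Tendsto p l (𝓝 0)) :
    LiftsToChart l p fun φ : (Fin n → ℝ) → Fin n → ℝ => (∀ j, IsNormalCrossing fun v => φ v j) ∧
      ((∀ q, (fun v => C q (φ v)) =ᶠ[𝓝 0] 0) ∨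
        ∃ θ ∈ coordinateMonomials n, θ 0 = 0 ∧ ∃ z,
          HasPowFactor θ m (fun q v => C q (φ v)) z ∧ (∃ q, z q 0 ≠ 0) ∧
          ∀ q, C q =ᶠ[𝓝 0] 0 → z q 0 = 0) := by
  cases nonempty_fintype I
  obtain ⟨M, hM, hmM⟩ : ∃ M ≠ 0, ∀ q, m q ∣ M :=
    ⟨∏ q, m q, Finset.prod_ne_zero_iff.2 fun q _ => hm q,
      fun q => Finset.dvd_prod_of_mem m (Finset.mem_univ q)⟩
  choose e he using fun q => (hmM q).imp fun _ => Eq.symm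
  obtain ⟨w, ψ, hw, hψ, hψ0, hpψ, hnc⟩ := hU (κ := Fin n ⊕ I ⊕ I × I)
    (G := Sum.elim (fun j v => v j)
      (Sum.elim C fun q v => C q.1 v ^ e q.1 - C q.2 v ^ e q.2))
    (Sum.rec (fun j => analyticAt_apply j 0) (Sum.rec hC fun q =>
      ((hC q.1).fun_pow _).sub ((hC q.2).fun_pow _))) hp
  obtain ⟨ε, s, hε, hs, hws⟩ := exists_tendsto_signedPower_eq hw hM
  have hanalytic := analyticAt_signedPower ε M
  have hzero := signedPower_zero ε hM
  refine ⟨s, ψ ∘ signedPower ε M, hs, hψ.comp_of_eq hanalytic hzero, ?_, ?_, fun j => ?_, ?_⟩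
  · rw [Function.comp_apply, hzero, hψ0]
  · filter_upwards [hpψ, hws] with ω hpω hwω
    simp only [hpω, Function.comp_apply, hwω]
  · exact (hnc (.inl j)).comp hanalytic hzero (isNormalCrossing_signedPower_apply hε M)
  · refine or_iff_not_imp_left.2 fun hne => ?_
    have hne' : ∃ q, ¬(fun v => C q (ψ v)) =ᶠ[𝓝 0] 0 := by
      by_contra! hall
      exact hne fun q =>
        (tendsto_nhds_of_analyticAt_of_eq hanalytic hzero).eventually (hall q)
    obtain ⟨θ, hθ, hθ0, z, hz, hz0, hz0'⟩ := exists_hasPowFactor_comp_signedPower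
      (C := fun q v => C q (ψ v)) (fun q => by rw [hψ0, hC0]) hM he (fun q => hnc (.inr (.inl q)))
      (fun q r => hnc (.inr (.inr (q, r)))) hne' hε
    exact ⟨θ, hθ, hθ0, z, hz, hz0, fun q hq =>
      hz0' q ((tendsto_nhds_of_analyticAt_of_eq hψ hψ0).eventually hq)⟩

end PowerFactor

end Uniformization

section RegularFamilies

variable {Ω : Type*} {l : Ultrafilter Ω} {n : ℕ} {ι : Type}

/-- In the chart `φ` the functions `F k` and all coordinates but the last are normal crossings. -/
def Monomializes (F : ι → (Fin n → ℝ) × ℝ → ℝ) (φ : (Fin (n + 1) → ℝ) → (Fin n → ℝ) × ℝ) : Prop :=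
  (∀ k, IsNormalCrossing fun v => F k (φ v)) ∧ ∀ j, IsNormalCrossing fun v => (φ v).1 j

/-- Local uniformization along `l` of the finite families of analytic functions which are regular of
orders `d` in the last variable. -/
def RegularUniformization (l : Ultrafilter Ω) (n : ℕ) (d : ι → ℕ) : Prop :=
  ∀ ⦃F : ι → (Fin n → ℝ) × ℝ → ℝ⦄, (∀ k, AnalyticAt ℝ (F k) 0) →
    (∀ k, analyticOrderAt (fun y => F k (0, y)) 0 = d k) →
      ∀ ⦃p : Ω → (Fin n → ℝ) × ℝ⦄, Tendsto p l (𝓝 0) → LiftsToChart l p (Monomializes F)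

theorem isNormalCrossing_comp_of_mem_coordinateMonomials {σ : Type*} [Fintype σ]
    {θ : (Fin n → ℝ) → ℝ} (hθ : θ ∈ coordinateMonomials n) {φ : (σ → ℝ) → Fin n → ℝ}
    (hφ : ∀ j, IsNormalCrossing fun v => φ v j) : IsNormalCrossing fun v => θ (φ v) := by
  induction hθ using Submonoid.closure_induction with
  | mem θ hθ =>
    obtain ⟨j, rfl⟩ := hθ
    exact hφ j
  | one => exact isNormalCrossing_of_ne_zero analyticAt_const one_ne_zero
  | mul θ θ' _ _ hθ hθ' => exact hθ.mul hθ'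

variable {d : ι → ℕ} {F : ι → (Fin n → ℝ) × ℝ → ℝ} {c : ∀ k, Fin (d k) → (Fin n → ℝ) → ℝ}
  {h : ι → (Fin n → ℝ) × ℝ → ℝ}

section BlowUp

variable {θ : (Fin n → ℝ) → ℝ} {z : ∀ k, Fin (d k) → (Fin n → ℝ) → ℝ}

theorem liftsToChart_monomializes_of_tendsto_div (hind : ∀ d' < d, RegularUniformization l n d')
    (hexp : ∀ k, HasLeadingExpansion (F k) (d k) (c k) (h k)) (hθ : θ ∈ coordinateMonomials n)
    (hθ0 : θ 0 = 0) (hz : ∀ k, HasPowFactor θ (fun i : Fin (d k) => d k - i) (c k) (z k))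
    (hne : ∃ k i, z k i 0 ≠ 0) {k₀ : ι} (hk₀ : d k₀ ≠ 0)
    (hlast : ∀ i : Fin (d k₀), (i : ℕ) + 1 = d k₀ → z k₀ i 0 = 0)
    {p : Ω → (Fin n → ℝ) × ℝ} (hp : Tendsto p l (𝓝 0)) (hθp : ∀ᶠ ω in l, θ (p ω).1 ≠ 0)
    {b : ℝ} (hb : Tendsto (fun ω => (p ω).2 / θ (p ω).1) l (𝓝 b)) :
    LiftsToChart l p (Monomializes F) := by
  have hθan := analyticAt_of_mem_coordinateMonomials hθ 0
  have hp' : Tendsto (fun ω => ((p ω).1, (p ω).2 / θ (p ω).1 - b)) l (𝓝 0) :=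
    hp.fst_nhds.prodMk_nhds (by simpa using hb.sub_const b)
  refine (hind _ (rootMultiplicity_leadingPolynomial_lt (fun k => (hexp k).lead_ne_zero) hne hk₀
    hlast b) (fun k => (hexp k).analyticAt_strictTransform (hz k) hθan hθ0 b)
    (fun k => analyticOrderAt_strictTransform hθ0 (hexp k).lead_ne_zero b) hp').map
    (analyticAt_blowUp hθan b) (by simp [hθ0]) ?_ ?_
  · filter_upwards [hθp] with ω hω
    simp [mul_div_cancel₀ _ hω]
  · rintro φ hφ hφ0 ⟨hφF, hφ1⟩
    refine ⟨fun k => ?_, hφ1⟩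
    have hθφ := isNormalCrossing_comp_of_mem_coordinateMonomials hθ hφ1
    exact ((hθφ.pow (d k)).mul (hφF k)).congr ((tendsto_nhds_of_analyticAt_of_eq hφ hφ0).eventually
      ((hexp k).blowUp_eventuallyEq (hz k) hθan hθ0 b))

theorem liftsToChart_monomializes_of_tendsto_div_zero
    (hexp : ∀ k, HasLeadingExpansion (F k) (d k) (c k) (h k)) (hθ : θ ∈ coordinateMonomials n)
    (hz : ∀ k, HasPowFactor θ (fun i : Fin (d k) => d k - i) (c k) (z k))
    {p : Ω → (Fin n → ℝ) × ℝ} (hp : Tendsto p l (𝓝 0)) (hp2 : ∀ᶠ ω in l, (p ω).2 ≠ 0)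
    (hlim : Tendsto (fun ω => θ (p ω).1 / (p ω).2) l (𝓝 0)) :
    LiftsToChart l p (Monomializes F) := by
  refine (liftsToChart_lastDivides hθ hp hp2 hlim).map analyticAt_id rfl .rfl ?_
  rintro φ hφ hφ0 ⟨hφ1, hφ2, t, ht, ht0, hφt⟩
  refine ⟨fun k => ?_, hφ1⟩
  obtain ⟨u, hu, hu0, hFu⟩ := (hexp k).exists_eventuallyEq_pow_mul (hz k) hφ hφ0 ht ht0 hφt
  exact ((hφ2.pow (d k)).mul (isNormalCrossing_of_ne_zero hu hu0)).congr hFu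

end BlowUp

theorem HasLeadingExpansion.isNormalCrossing_comp {σ X : Type*} [Fintype σ] [NormedAddCommGroup X]
    [NormedSpace ℝ X] {d : ℕ} {F h : X × ℝ → ℝ} {c : Fin d → X → ℝ}
    (hexp : HasLeadingExpansion F d c h) {φ : (σ → ℝ) → X × ℝ} (hφ : AnalyticAt ℝ φ 0)
    (hφ0 : φ 0 = 0) (hc : ∀ i, (fun v => c i (φ v).1) =ᶠ[𝓝 0] 0)
    (hφ2 : IsNormalCrossing fun v => (φ v).2) : IsNormalCrossing fun v => F (φ v) := by
  have hunit := isNormalCrossing_of_ne_zero (hexp.analyticAt_lead.fun_comp_of_eq hφ hφ0)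
    (by simpa only [hφ0] using hexp.lead_ne_zero)
  refine (hunit.mul (hφ2.pow d)).congr ?_
  filter_upwards [(tendsto_nhds_of_analyticAt_of_eq hφ hφ0).eventually hexp.eventuallyEq,
    eventually_all.2 hc] with v hF hc
  simp [hF, hc]

theorem LocalUniformization.liftsToChart_monomializes_of_snd_eq_zero [Finite ι]
    (hU : LocalUniformization l n) (hF : ∀ k, AnalyticAt ℝ (F k) 0) {p : Ω → (Fin n → ℝ) × ℝ}
    (hp : Tendsto p l (𝓝 0)) (hp2 : ∀ᶠ ω in l, (p ω).2 = 0) :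
    LiftsToChart l p (Monomializes F) := by
  have hbase : AnalyticAt ℝ (fun x : Fin n → ℝ => (x, (0 : ℝ))) 0 :=
    analyticAt_id.prod analyticAt_const
  obtain ⟨w, ψ, hw, hψ, hψ0, hpψ, hnc⟩ := hU (κ := ι ⊕ Fin n)
    (G := Sum.elim (fun k x => F k (x, 0)) fun j x => x j)
    (Sum.rec (fun k => (hF k).fun_comp_of_eq hbase rfl) fun j => analyticAt_apply j 0) hp.fst_nhds
  have htail : AnalyticAt ℝ (fun v : Fin (n + 1) → ℝ => Fin.tail v) 0 :=
    analyticAt_fst.fun_comp_of_eq analyticAt_tail_prod_head rfl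
  have htail' (j : Fin n) : IsNormalCrossing fun v : Fin (n + 1) → ℝ => Fin.tail v j :=
    isNormalCrossing_apply j.succ
  refine liftsToChart_comp_tail_prod_head (χ := fun z => (ψ z.1, 0)) (p' := fun ω => (w ω, (p ω).2))
    ((hψ.fun_comp_of_eq analyticAt_fst rfl).prod analyticAt_const) (Prod.ext hψ0 rfl)
    (hw.prodMk_nhds hp.snd_nhds) ?_ ⟨fun k => ?_, fun j => ?_⟩
  · filter_upwards [hpψ, hp2] with ω hω hω2
    exact Prod.ext hω hω2
  · exact (hnc (.inl k)).comp htail rfl htail'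
  · exact (hnc (.inr j)).comp htail rfl htail'

theorem LiftsToChart.of_comp_base {w : Ω → Fin n → ℝ} {ψ : (Fin n → ℝ) → Fin n → ℝ}
    {p : Ω → (Fin n → ℝ) × ℝ}
    (hlift : LiftsToChart l (fun ω => (w ω, (p ω).2)) (Monomializes fun k z => F k (ψ z.1, z.2)))
    (hψ : AnalyticAt ℝ ψ 0) (hψ0 : ψ 0 = 0) (hψ' : ∀ j, IsNormalCrossing fun v => ψ v j)
    (hp : (fun ω => (p ω).1) =ᶠ[l] ψ ∘ w) : LiftsToChart l p (Monomializes F) := by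
  refine hlift.map ((hψ.fun_comp_of_eq analyticAt_fst rfl).prod analyticAt_snd) (Prod.ext hψ0 rfl)
    (hp.mono fun ω hω => Prod.ext hω rfl) ?_
  rintro φ hφ hφ0 ⟨hφF, hφ1⟩
  exact ⟨hφF, fun j => (hψ' j).comp (analyticAt_fst.fun_comp hφ) (congrArg Prod.fst hφ0) hφ1⟩

theorem LocalUniformization.liftsToChart_monomializes [Finite ι] (hU : LocalUniformization l n)
    (hind : ∀ d' < d, RegularUniformization l n d')
    (hexp : ∀ k, HasLeadingExpansion (F k) (d k) (c k) (h k))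
    (hlast : (∃ k, d k ≠ 0) → ∃ k₀, d k₀ ≠ 0 ∧
      ∀ i : Fin (d k₀), (i : ℕ) + 1 = d k₀ → c k₀ i =ᶠ[𝓝 0] 0)
    {p : Ω → (Fin n → ℝ) × ℝ} (hp : Tendsto p l (𝓝 0)) (hp2 : ∀ᶠ ω in l, (p ω).2 ≠ 0) :
    LiftsToChart l p (Monomializes F) := by
  obtain ⟨w, ψ, hw, hψ, hψ0, hpψ, hψ', hcases⟩ := hU.liftsToChart_hasPowFactor
    (C := fun q : Σ k, Fin (d k) => c q.1 q.2) (m := fun q => d q.1 - q.2)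
    (fun q => (hexp q.1).analyticAt_coeff q.2) (fun q => (hexp q.1).coeff_zero q.2)
    (fun q => Nat.sub_ne_zero_of_lt q.2.2) hp.fst_nhds
  refine LiftsToChart.of_comp_base (w := w) ?_ hψ hψ0 hψ' hpψ
  have hexp' (k) := (hexp k).comp_base hψ hψ0
  have hp' : Tendsto (fun ω => (w ω, (p ω).2)) l (𝓝 0) := hw.prodMk_nhds hp.snd_nhds
  rcases hcases with hc | ⟨θ, hθ, hθ0, z, hz, ⟨q, hq⟩, hz0⟩
  · have htail : Tendsto (fun v : Fin (n + 1) → ℝ => Fin.tail v) (𝓝 0) (𝓝 0) :=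
      (tendsto_nhds_of_analyticAt_of_eq analyticAt_tail_prod_head rfl).fst_nhds
    exact liftsToChart_comp_tail_prod_head analyticAt_id rfl hp' .rfl
      ⟨fun k => (hexp' k).isNormalCrossing_comp analyticAt_tail_prod_head rfl
        (fun i => htail.eventually (hc ⟨k, i⟩)) (isNormalCrossing_apply 0),
        fun j => isNormalCrossing_apply j.succ⟩
  · have hz' (k) : HasPowFactor θ (fun i : Fin (d k) => d k - i) (fun i v => c k i (ψ v))
        fun i => z ⟨k, i⟩ := ⟨fun i => hz.analyticAt ⟨k, i⟩, fun i => hz.eventuallyEq ⟨k, i⟩⟩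
    rcases tendsto_zero_or_exists_tendsto_inv (l := l) fun ω => θ (w ω) / (p ω).2 with
      hlim | ⟨hne, b, hb⟩
    · exact liftsToChart_monomializes_of_tendsto_div_zero hexp' hθ hz' hp' hp2 hlim
    · obtain ⟨k₀, hk₀, hlast⟩ := hlast ⟨q.1, (Fin.pos q.2).ne'⟩
      exact liftsToChart_monomializes_of_tendsto_div (z := fun k i => z ⟨k, i⟩) hind hexp' hθ
        hθ0 hz' ⟨q.1, q.2, hq⟩ hk₀
        (fun i hi => hz0 ⟨k₀, i⟩ (hlast i hi)) hp'
        (hne.mono fun ω hω h => hω (by simp [h])) (hb.congr fun ω => inv_div _ _)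

theorem exists_translation_last_coeff_eq_zero (hF : ∀ k, AnalyticAt ℝ (F k) 0)
    (hord : ∀ k, analyticOrderAt (fun y => F k (0, y)) 0 = d k) :
    ∃ a : (Fin n → ℝ) → ℝ, AnalyticAt ℝ a 0 ∧ a 0 = 0 ∧
      ∃ (c : ∀ k, Fin (d k) → (Fin n → ℝ) → ℝ) (h : ι → (Fin n → ℝ) × ℝ → ℝ),
        (∀ k, HasLeadingExpansion (fun z => F k (z.1, a z.1 + z.2)) (d k) (c k) (h k)) ∧
        ((∃ k, d k ≠ 0) → ∃ k₀, d k₀ ≠ 0 ∧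
          ∀ i : Fin (d k₀), (i : ℕ) + 1 = d k₀ → c k₀ i =ᶠ[𝓝 0] 0) := by
  by_cases hd : ∃ k₀, d k₀ ≠ 0
  · obtain ⟨k₀, hk₀⟩ := hd
    obtain ⟨a, ha, ha0, c, h, hexp, hlast⟩ := exists_translation_hasLeadingExpansion hF hord k₀
    exact ⟨a, ha, ha0, c, h, hexp, fun _ => ⟨k₀, hk₀, hlast⟩⟩
  · choose c h hexp using fun k => exists_hasLeadingExpansion (hF k) (hord k)
    exact ⟨0, analyticAt_const, rfl, c, h, by simpa using hexp, fun hd' => (hd hd').elim⟩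

theorem LocalUniformization.regularUniformization [Finite ι] (hU : LocalUniformization l n)
    (d : ι → ℕ) : RegularUniformization l n d := by
  induction d using WellFoundedLT.induction with
  | ind d ih =>
  intro F hF hord p hp
  obtain ⟨a, ha, ha0, c, h, hexp, hlast⟩ := exists_translation_last_coeff_eq_zero hF hord
  have hshift : AnalyticAt ℝ (fun z : (Fin n → ℝ) × ℝ => (z.1, a z.1 + z.2)) 0 :=
    analyticAt_fst.prod ((ha.fun_comp_of_eq analyticAt_fst rfl).add analyticAt_snd)
  have hshift0 : (fun z : (Fin n → ℝ) × ℝ => (z.1, a z.1 + z.2)) 0 = 0 := by simp [ha0]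
  have hp' : Tendsto (fun ω => ((p ω).1, (p ω).2 - a (p ω).1)) l (𝓝 0) :=
    hp.fst_nhds.prodMk_nhds (by
      simpa using hp.snd_nhds.sub ((tendsto_nhds_of_analyticAt_of_eq ha ha0).comp hp.fst_nhds))
  have hlift : LiftsToChart l (fun ω => ((p ω).1, (p ω).2 - a (p ω).1))
      (Monomializes fun k z => F k (z.1, a z.1 + z.2)) := by
    rcases l.em fun ω => (p ω).2 - a (p ω).1 = 0 with h0 | h0
    · exact hU.liftsToChart_monomializes_of_snd_eq_zero
        (fun k => (hF k).fun_comp_of_eq hshift hshift0) hp' h0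
    · exact hU.liftsToChart_monomializes ih hexp hlast hp' h0
  exact hlift.map hshift hshift0 (.of_forall fun ω => by simp) fun φ _ _ hφ => hφ

end RegularFamilies

section Direction

variable {E : Type*} [NormedAddCommGroup E] [NormedSpace ℝ E]

theorem eventuallyEq_zero_or_of_mul_eventuallyEq_zero {g h : E → ℝ} {x : E}
    (hg : AnalyticAt ℝ g x) (hh : AnalyticAt ℝ h x) (hgh : g * h =ᶠ[𝓝 x] 0) :
    g =ᶠ[𝓝 x] 0 ∨ h =ᶠ[𝓝 x] 0 := by
  by_contra! hne
  obtain ⟨r, hr, hball⟩ := Metric.eventually_nhds_iff_ball.1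
    (hg.eventually_analyticAt.and (hh.eventually_analyticAt.and hgh))
  obtain ⟨v, hgv, hv⟩ :=
    ((not_eventually.1 hne.1).and_eventually (Metric.ball_mem_nhds x hr)).exists
  have hhv : h =ᶠ[𝓝 v] 0 := by
    filter_upwards [(hball v hv).1.continuousAt.eventually_ne hgv,
      Metric.isOpen_ball.mem_nhds hv] with u hgu hu
    exact (mul_eq_zero.1 (hball u hu).2.2).resolve_left hgu
  have hhball : AnalyticOnNhd ℝ h (Metric.ball x r) := fun u hu => (hball u hu).2.1
  exact hne.2 (eventually_of_mem (Metric.ball_mem_nhds x hr)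
    (hhball.eqOn_zero_of_preconnected_of_eventuallyEq_zero
      (convex_ball x r).isPreconnected hv hhv))

theorem prod_not_eventuallyEq_zero {κ : Type*} {G : κ → E → ℝ} {x : E}
    (hG : ∀ k, AnalyticAt ℝ (G k) x) (hne : ∀ k, ¬ G k =ᶠ[𝓝 x] 0) (s : Finset κ) :
    ¬ ∏ k ∈ s, G k =ᶠ[𝓝 x] 0 := by
  induction s using Finset.cons_induction with
  | empty => exact fun h => one_ne_zero h.eq_of_nhds
  | cons k s hk ih =>
    rw [Finset.prod_cons]
    exact fun h => (eventuallyEq_zero_or_of_mul_eventuallyEq_zero (hG k)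
      (s.analyticAt_prod fun j _ => hG j) h).elim (hne k) ih

theorem eventually_not_eventuallyEq_zero_smul {g : E → ℝ} (hg : AnalyticAt ℝ g 0) :
    ∀ᶠ v in 𝓝 0, g v ≠ 0 → ¬ (fun t : ℝ => g (t • v)) =ᶠ[𝓝 0] 0 := by
  obtain ⟨r, hr, hball⟩ := Metric.eventually_nhds_iff_ball.1 hg.eventually_analyticAt
  filter_upwards [Metric.ball_mem_nhds 0 hr] with v hv hgv hline
  have hsegment : AnalyticOnNhd ℝ (fun t : ℝ => g (t • v)) (Set.Icc 0 1) := fun t ht =>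
    (hball _ ((convex_ball 0 r).smul_mem_of_zero_mem (Metric.mem_ball_self hr) hv ht)).fun_comp
      (f := fun t : ℝ => t • v) (analyticAt_id.smul analyticAt_const)
  have hg1 : g ((1 : ℝ) • v) = 0 := hsegment.eqOn_zero_of_preconnected_of_eventuallyEq_zero
    isPreconnected_Icc (Set.left_mem_Icc.2 zero_le_one) hline (Set.right_mem_Icc.2 zero_le_one)
  exact hgv (by simpa using hg1)

theorem exists_direction_not_eventuallyEq_zero [Nontrivial E] {κ : Type*} [Finite κ]
    {G : κ → E → ℝ} (hG : ∀ k, AnalyticAt ℝ (G k) 0) (hne : ∀ k, ¬ G k =ᶠ[𝓝 0] 0) :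
    ∃ e : E, e ≠ 0 ∧ ∀ k, ¬ (fun t : ℝ => G k (t • e)) =ᶠ[𝓝 0] 0 := by
  cases nonempty_fintype κ
  have : (𝓝[≠] (0 : E)).NeBot := Module.punctured_nhds_neBot ℝ E 0
  have hprod : AnalyticAt ℝ (∏ k, G k) 0 := Finset.univ.analyticAt_prod fun k _ => hG k
  have hfreq : ∃ᶠ v in 𝓝[≠] (0 : E), (∏ k, G k) v ≠ 0 := not_eventually.1 fun h =>
    prod_not_eventuallyEq_zero hG hne Finset.univ
      ((hprod.continuousAt.eventuallyEq_nhds_iff_eventuallyEq_nhdsNE continuousAt_const).1 h)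
  have hlines := eventually_all.2 fun k => eventually_not_eventuallyEq_zero_smul (hG k)
  obtain ⟨e, hGe, he, hline⟩ := (hfreq.and_eventually
    (eventually_mem_nhdsWithin.and (hlines.filter_mono nhdsWithin_le_nhds))).exists
  rw [Finset.prod_apply] at hGe
  exact ⟨e, he, fun k => hline k (Finset.prod_ne_zero_iff.1 hGe k (Finset.mem_univ k))⟩

theorem exists_continuousLinearEquiv_prod_apply_eq {n : ℕ} {e : Fin (n + 1) → ℝ} (he : e ≠ 0) :
    ∃ L : ((Fin n → ℝ) × ℝ) ≃L[ℝ] (Fin (n + 1) → ℝ), L (0, 1) = e := by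
  have L₀ : ((Fin n → ℝ) × ℝ) ≃L[ℝ] (Fin (n + 1) → ℝ) := .ofFinrankEq (by simp)
  obtain ⟨A, hA⟩ := SeparatingDual.exists_continuousLinearEquiv_apply_eq (R := ℝ)
    (L₀.map_ne_zero_iff.2 (by simp : ((0, 1) : (Fin n → ℝ) × ℝ) ≠ 0)) he
  exact ⟨L₀.trans A, hA⟩

end Direction

section Induction

variable {Ω : Type*} {l : Ultrafilter Ω} {n : ℕ}

theorem localUniformization_zero (l : Ultrafilter Ω) : LocalUniformization l 0 := by
  intro κ _ G hG p hp
  refine ⟨p, id, hp, analyticAt_id, rfl, .rfl, fun j => ?_⟩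
  by_cases hGj : G j 0 = 0
  · exact .inl (.of_forall fun v => by simpa [Subsingleton.elim v 0] using hGj)
  · exact isNormalCrossing_of_ne_zero (hG j) hGj

theorem LocalUniformization.succ (hU : LocalUniformization l n) :
    LocalUniformization l (n + 1) := by
  intro κ _ G hG p hp
  let F (k : {k // ¬ G k =ᶠ[𝓝 0] 0}) : (Fin (n + 1) → ℝ) → ℝ := G k
  obtain ⟨e, he, hline⟩ := exists_direction_not_eventuallyEq_zero (G := F)
    (fun k => hG k) fun k => k.2
  obtain ⟨L, rfl⟩ := exists_continuousLinearEquiv_prod_apply_eq he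
  have hL (x) : AnalyticAt ℝ L x := L.analyticAt x
  have hFL (k) : AnalyticAt ℝ (fun z => F k (L z)) 0 := (hG k).fun_comp_of_eq (hL 0) L.map_zero
  have horder (k) : analyticOrderAt (fun y => F k (L (0, y))) 0 ≠ ⊤ := by
    have hscale (t : ℝ) : t • L (0, 1) = L (0, t) := by rw [← L.map_smul]; simp
    simp only [hscale] at hline
    exact fun h => hline k (analyticOrderAt_eq_top.1 h)
  have hp' : Tendsto (L.symm ∘ p) l (𝓝 0) := L.symm.map_zero ▸ (L.symm.continuous.tendsto 0).comp hp
  refine (hU.regularUniformization _ hFL (fun k => (ENat.natCast_toNat (horder k)).symm) hp').map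
    (hL 0) L.map_zero (.of_forall fun ω => (L.apply_symm_apply (p ω)).symm) ?_
  intro φ hφ hφ0 hφF k
  by_cases hk : G k =ᶠ[𝓝 0] 0
  · exact .inl ((tendsto_nhds_of_analyticAt_of_eq ((hL 0).comp_of_eq hφ hφ0)
      (by simp [hφ0])).eventually hk)
  · exact hφF.1 ⟨k, hk⟩

theorem localUniformization (l : Ultrafilter Ω) : ∀ n, LocalUniformization l n
  | 0 => localUniformization_zero l
  | n + 1 => (localUniformization l n).succ

end Induction

section BochnakLojasiewicz

theorem isBigO_of_forall_ultrafilter {α E F : Type*} [Norm E] [SeminormedAddGroup F]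
    {l : Filter α} {f : α → E} {g : α → F} (h : ∀ u : Ultrafilter α, ↑u ≤ l → f =O[u] g) :
    f =O[l] g := by
  by_contra hfg
  let S (c : ℕ) : Set α := {x | c * ‖g x‖ < ‖f x‖}
  have hS : Antitone S := fun c d hcd x hx => lt_of_le_of_lt
    (mul_le_mul_of_nonneg_right (Nat.cast_le.2 hcd) (norm_nonneg _)) hx
  have hdirected : Directed (· ≥ ·) fun c => l ⊓ 𝓟 (S c) :=
    directed_of_isDirected_le fun c d hcd => inf_le_inf_left l (principal_mono.2 (hS hcd))
  have hneBot (c : ℕ) : (l ⊓ 𝓟 (S c)).NeBot := frequently_mem_iff_neBot.1 fun hc =>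
    hfg (.of_bound c (hc.mono fun x hx => not_lt.1 hx))
  have : (⨅ c, l ⊓ 𝓟 (S c)).NeBot := iInf_neBot_of_directed' hdirected hneBot
  obtain ⟨u, hu⟩ := (⨅ c, l ⊓ 𝓟 (S c)).exists_ultrafilter_le
  obtain ⟨C, hC⟩ := (h u (hu.trans ((iInf_le _ 0).trans inf_le_left))).bound
  obtain ⟨c, hc⟩ := exists_nat_ge C
  have hcu : S c ∈ u := le_principal_iff.1 (hu.trans ((iInf_le _ c).trans inf_le_right))
  obtain ⟨x, hxC, hxc⟩ := (hC.and hcu).exists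
  exact (hxC.trans (mul_le_mul_of_nonneg_right hc (norm_nonneg _))).not_gt hxc

section Chart

variable {σ τ : Type*} [Fintype σ] [Fintype τ] {φ : (σ → ℝ) → τ → ℝ}

theorem fderiv_apply_self_isBigO_of_forall_isNormalCrossing (hφ : AnalyticAt ℝ φ 0)
    (hφj : ∀ j, IsNormalCrossing fun v => φ v j) : (fun v => fderiv ℝ φ v v) =O[𝓝 0] φ := by
  refine Asymptotics.isBigO_pi.2 fun j => ?_
  have hcoord : (fun v => fderiv ℝ φ v v j) =ᶠ[𝓝 0] fun v => fderiv ℝ (fun v => φ v j) v v := by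
    filter_upwards [hφ.eventually_analyticAt] with v hv
    rw [(hasFDerivAt_pi'.1 hv.differentiableAt.hasFDerivAt j).fderiv]
    rfl
  exact hcoord.trans_isBigO ((hφj j).fderiv_apply_self_isBigO.trans
    (Asymptotics.isBigO_pi.1 (Asymptotics.isBigO_refl φ (𝓝 0)) j))

theorem isBigO_norm_mul_norm_fderiv_comp {g : (τ → ℝ) → ℝ} (hg : AnalyticAt ℝ g 0) (hg0 : g 0 = 0)
    (hφ : AnalyticAt ℝ φ 0) (hφ0 : φ 0 = 0) (hφj : ∀ j, IsNormalCrossing fun v => φ v j)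
    (hgφ : IsNormalCrossing fun v => g (φ v)) :
    (g ∘ φ) =O[𝓝 0] fun v => ‖φ v‖ * ‖fderiv ℝ g (φ v)‖ := by
  have hchain : (fun v => fderiv ℝ (g ∘ φ) v v) =O[𝓝 0]
      fun v => ‖fderiv ℝ φ v v‖ * ‖fderiv ℝ g (φ v)‖ := by
    refine .of_bound' ?_
    filter_upwards [hφ.eventually_analyticAt,
      (tendsto_nhds_of_analyticAt_of_eq hφ hφ0).eventually hg.eventually_analyticAt] with v hφv hgv
    rw [fderiv_comp v hgv.differentiableAt hφv.differentiableAt, norm_mul, norm_norm, norm_norm,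
      mul_comm]
    exact (fderiv ℝ g (φ v)).le_opNorm _
  exact ((hgφ.isBigO_fderiv_apply_self (by rw [hφ0, hg0])).trans hchain).trans
    ((fderiv_apply_self_isBigO_of_forall_isNormalCrossing hφ hφj).norm_norm.mul
      (Asymptotics.isBigO_refl _ _))

end Chart

theorem isBigO_norm_mul_norm_fderiv_pi {n : ℕ} {g : (Fin n → ℝ) → ℝ} (hg : AnalyticAt ℝ g 0)
    (hg0 : g 0 = 0) : g =O[𝓝 0] fun x => ‖x‖ * ‖fderiv ℝ g x‖ := by
  refine isBigO_of_forall_ultrafilter fun l hl => ?_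
  let G : Option (Fin n) → (Fin n → ℝ) → ℝ := fun o => o.elim g fun j x => x j
  have hG (o) : AnalyticAt ℝ (G o) 0 := o.rec hg fun j => analyticAt_apply j 0
  obtain ⟨w, φ, hw, hφ, hφ0, hwφ, hGφ⟩ := localUniformization l n hG (tendsto_id'.2 hl)
  have hbound := (isBigO_norm_mul_norm_fderiv_comp hg hg0 hφ hφ0 (fun j => hGφ (some j))
    (hGφ none)).comp_tendsto hw
  refine hbound.congr' ?_ ?_ <;> filter_upwards [hwφ] with x hx <;>
    simp only [Function.comp_apply, ← show x = φ (w x) from hx]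

theorem isBigO_norm_sub_mul_norm_fderiv {E : Type*} [NormedAddCommGroup E] [NormedSpace ℝ E]
    [FiniteDimensional ℝ E] {g : E → ℝ} {a : E} (hg : AnalyticAt ℝ g a) (hga : g a = 0) :
    g =O[𝓝 a] fun x => ‖x - a‖ * ‖fderiv ℝ g x‖ := by
  let L : E ≃L[ℝ] (Fin (Module.finrank ℝ E) → ℝ) := .ofFinrankEq (by simp)
  let h (y : Fin (Module.finrank ℝ E) → ℝ) : ℝ := g (L.symm y + a)
  have hh : AnalyticAt ℝ h 0 := hg.fun_comp_of_eq
    ((L.symm.analyticAt 0).add analyticAt_const) (by simp)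
  have hfderiv (y) : fderiv ℝ h y = fderiv ℝ g (L.symm y + a) ∘L ↑L.symm := by
    rw [← fderiv_comp_add_right a]
    exact L.symm.comp_right_fderiv (f := fun x => g (x + a))
  have hL : Tendsto (fun x => L (x - a)) (𝓝 a) (𝓝 0) :=
    Continuous.tendsto' (by fun_prop) _ _ (by simp)
  have hbound := (isBigO_norm_mul_norm_fderiv_pi hh (by simp [h, hga])).comp_tendsto hL
  have hgh : h ∘ (fun x => L (x - a)) = g := by ext x; simp [h]
  rw [hgh] at hbound
  refine hbound.trans ((L.isBigO_comp _ _).norm_norm.mul ?_)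
  refine .of_bound ‖(L.symm : (Fin (Module.finrank ℝ E) → ℝ) →L[ℝ] E)‖ (.of_forall fun x => ?_)
  rw [norm_norm, norm_norm, hfderiv, L.symm_apply_apply, sub_add_cancel, mul_comm]
  exact ContinuousLinearMap.opNorm_comp_le _ _

end BochnakLojasiewicz

section Gradient

variable {E : Type*} [NormedAddCommGroup E] [InnerProductSpace ℝ E] [CompleteSpace E]
  {f : E → ℝ} {x : E}

theorem analyticAt_gradient (hf : AnalyticAt ℝ f x) : AnalyticAt ℝ (gradient f) x :=
  ((InnerProductSpace.toDual ℝ E).symm.toContinuousLinearEquiv.analyticAt _).comp hf.fderiv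

theorem inner_fderiv_gradient_apply (hf : AnalyticAt ℝ f x) (v w : E) :
    ⟪fderiv ℝ (gradient f) x v, w⟫ = fderiv ℝ (fderiv ℝ f) x v w := by
  have hgradient : HasFDerivAt (gradient f) _ x :=
    (InnerProductSpace.toDual ℝ E).symm.toContinuousLinearEquiv.hasFDerivAt.comp x
      hf.fderiv.differentiableAt.hasFDerivAt
  rw [hgradient.fderiv]
  exact InnerProductSpace.toDual_symm_apply

theorem inner_fderiv_gradient_comm (hf : AnalyticAt ℝ f x) (v w : E) :
    ⟪fderiv ℝ (gradient f) x v, w⟫ = ⟪fderiv ℝ (gradient f) x w, v⟫ := by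
  rw [inner_fderiv_gradient_apply hf, inner_fderiv_gradient_apply hf]
  exact hf.contDiffAt.isSymmSndFDerivAt (n := 2) (by simp) v w

theorem fderiv_norm_gradient_sq (hf : AnalyticAt ℝ f x) :
    fderiv ℝ (fun y => ‖gradient f y‖ ^ 2) x =
      2 • innerSL ℝ (fderiv ℝ (gradient f) x (gradient f x)) := by
  rw [(analyticAt_gradient hf).differentiableAt.hasFDerivAt.norm_sq.fderiv]
  ext v
  simp [inner_fderiv_gradient_comm hf (gradient f x) v]

theorem analyticAt_norm_gradient_sq (hf : AnalyticAt ℝ f x) :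
    AnalyticAt ℝ (fun y => ‖gradient f y‖ ^ 2) x := by
  have hgradient := analyticAt_gradient hf
  have hinner : AnalyticAt ℝ (fun z : E × E => ⟪z.1, z.2⟫) (gradient f x, gradient f x) :=
    (innerSL ℝ).analyticAt_bilinear _
  simpa only [real_inner_self_eq_norm_sq] using hinner.fun_comp_of_eq
    (hgradient.prod hgradient) rfl

end Gradient

theorem bochnak_lojasiewicz_for_norm_gradient_general {E : Type*} [NormedAddCommGroup E]
    [InnerProductSpace ℝ E] [FiniteDimensional ℝ E] {f : E → ℝ} {a : E} (hf : AnalyticAt ℝ f a)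
    (hfa : gradient f a = 0) : ∃ C : ℝ, 0 < C ∧ ∀ᶠ x in 𝓝 a,
      C * ‖gradient f x‖ ^ 2 ≤ ‖x - a‖ * ‖fderiv ℝ (gradient f) x (gradient f x)‖ := by
  obtain ⟨C, hC, hbound⟩ := (isBigO_norm_sub_mul_norm_fderiv (analyticAt_norm_gradient_sq hf)
    (by simp [hfa])).exists_pos
  refine ⟨(C * 2)⁻¹, by positivity, ?_⟩
  filter_upwards [hf.eventually_analyticAt, hbound.bound] with x hx hxC
  have hnorm : ‖fderiv ℝ (fun y => ‖gradient f y‖ ^ 2) x‖ =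
      2 * ‖fderiv ℝ (gradient f) x (gradient f x)‖ := by
    rw [fderiv_norm_gradient_sq hx, ← Nat.cast_smul_eq_nsmul ℝ, norm_smul, innerSL_apply_norm]
    norm_num
  rw [hnorm, mul_left_comm, norm_mul, norm_mul, norm_pow, norm_norm, norm_norm, norm_norm,
    Real.norm_ofNat, ← mul_assoc] at hxC
  exact (inv_mul_le_iff₀ (by positivity)).2 hxC

/-- Bochnak–Łojasiewicz inequality applied to `|∇f|`: near the origin,
`|x|·|Hs(f)(x)·∇f(x)| ≥ C·|∇f(x)|²`. -/
theorem bochnak_lojasiewicz_for_norm_gradient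
    {n : ℕ} (hn : 2 ≤ n)
    (U : Set (EuclideanSpace ℝ (Fin n))) (hUopen : IsOpen U)
    (hOU : (0 : EuclideanSpace ℝ (Fin n)) ∈ U)
    (f : EuclideanSpace ℝ (Fin n) → ℝ)
    (hfan : AnalyticOnNhd ℝ f U) (hf0 : f 0 = 0) (hgf0 : gradient f 0 = 0)
    :
    ∃ C : ℝ, 0 < C ∧ ∃ V : Set (EuclideanSpace ℝ (Fin n)),
      IsOpen V ∧ V ⊆ U ∧ (0 : EuclideanSpace ℝ (Fin n)) ∈ V ∧
      ∀ x ∈ V, C * ‖gradient f x‖ ^ 2 ≤ ‖x‖ * ‖fderiv ℝ (gradient f) x (gradient f x)‖ := by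
  obtain ⟨C, hC, hbound⟩ := bochnak_lojasiewicz_for_norm_gradient_general (hfan 0 hOU) hgf0
  obtain ⟨V, hV, hVopen, hV0⟩ := mem_nhds_iff.1 (inter_mem (hUopen.mem_nhds hOU) hbound)
  exact ⟨C, hC, V, hVopen, fun x hx => (hV hx).1, hV0, fun x hx => by simpa using (hV hx).2⟩
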